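/- For all nonnegative integers a and b, the number of self-complementary plane partitions contained in an a×a×2b box equals the square of the number of plane partitions contained in that box which are both symmetric and self-complementary. (Equation (1.2): SC(a,a,2b) = SSC(a,a,2b)².) -/

import Mathlib

/-- The transpose of (the diagram of) a plane partition contained in an `a × a × c` box:
`(i,j,k)` is in the transpose iff `(j,i,k)` is in `T`. -/
def ppTranspose {a c : ℕ} (T : Set (Fin a × Fin a × Fin c)) : Set (Fin a × Fin a × Fin c) :=
  {x | (x.2.1, x.1, x.2.2) ∈ T}

/-- The complement of (the diagram of) a plane partition contained in an `a × b × c` box: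
`(i,j,k)` is in the complement iff `(a-1-i, b-1-j, c-1-k)` is not in `T`. -/
def ppComplement {a b c : ℕ} (T : Set (Fin a × Fin b × Fin c)) : Set (Fin a × Fin b × Fin c) :=
  {x | (x.1.rev, x.2.1.rev, x.2.2.rev) ∉ T}

/-! A self-complementary plane partition is determined by the diagonals of its height function on
one side of the main diagonal. They form a Gelfand–Tsetlin pattern whose top row `l` satisfies
`l p + l (a - 1 - p) = 2 * b`. For a symmetric one, the excess over `b` of these diagonals forms a
half-triangular pattern with entries at most `b`, and again every such pattern occurs. With
`m = a / 2`, the possible top rows of both kinds are parametrised by the `m`-subsets `z` of a grid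
with `b + m` points.

The patterns with a given top row are counted by a determinant in any sequence of polynomials that
are successive antiderivatives for the central difference. On the points of a self-complementary
top row, which are symmetric about `0`, the matrix of the triangular patterns splits into an even
and an odd part, by the parity of the polynomials. For the means of the central binomial
polynomials one part counts the half-triangular patterns, as a maximal minor `det Φ_z`, and the
other is a maximal minor of `Φ L`, where `L` is the sum of the matrices of the weak and the strict
order on the grid. So up to a sign the first count is `∑ det Φ_z det (Φ L)_z`, which is
`det (Φ L Φᵀ)` by the Cauchy–Binet formula, and this is `(∑ det Φ_z) ^ 2` by a minor summation
formula. -/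

namespace PlanePartition

open Finset Matrix

/-! ### Minor summation -/

section CauchyBinet

variable {R α : Type*} [CommRing R]

theorem det_mul_transpose_eq_sum_fun [Fintype α] {m : ℕ} (Φ Ψ : Matrix (Fin m) α R) :
    (Φ * Ψᵀ).det = ∑ p : Fin m → α, (Φ.submatrix id p).det * ∏ i, Ψ i (p i) := by
  classical
  have hrows : (Φ * Ψᵀ)ᵀ = fun i => ∑ x, Ψ i x • Φᵀ x := by
    ext i j
    simp [Matrix.mul_apply, Finset.sum_apply, mul_comm]
  rw [← det_transpose, hrows]
  change (detRowAlternating (R := R)).toMultilinearMap _ = _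
  rw [MultilinearMap.map_sum]
  refine sum_congr rfl fun p _ => ?_
  rw [MultilinearMap.map_smul_univ, smul_eq_mul, mul_comm, ← det_transpose (Φ.submatrix id p)]
  rfl

variable [LinearOrder α]

theorem exists_orderEmb_comp_perm {m : ℕ} {p : Fin m → α} (hp : p.Injective) :
    ∃ (f : Fin m ↪o α) (σ : Equiv.Perm (Fin m)), f ∘ σ = p := by
  have hmono : StrictMono (p ∘ Tuple.sort p) :=
    (Tuple.monotone_sort p).strictMono_of_injective (hp.comp (Tuple.sort p).injective)
  exact ⟨OrderEmbedding.ofStrictMono _ hmono, (Tuple.sort p).symm, by ext; simp⟩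

theorem orderEmb_comp_perm_injective {m : ℕ} :
    Function.Injective fun fσ : (Fin m ↪o α) × Equiv.Perm (Fin m) => (fσ.1 ∘ fσ.2 : Fin m → α) := by
  rintro ⟨f, σ⟩ ⟨g, τ⟩ (h : f ∘ σ = g ∘ τ)
  obtain rfl : f = g := OrderEmbedding.range_inj.mp <| by
    rw [← EquivLike.range_comp f σ, h, EquivLike.range_comp g τ]
  refine Prod.ext rfl (Equiv.ext fun i => f.injective (congrFun h i))

/-- **Cauchy–Binet formula**. -/
theorem det_mul_transpose_eq_sum_orderEmb [Fintype α] {m : ℕ} (Φ Ψ : Matrix (Fin m) α R) :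
    (Φ * Ψᵀ).det =
      ∑ f : Fin m ↪o α, (Φ.submatrix id f).det * (Ψ.submatrix id f).det := by
  have hexpand (f : Fin m ↪o α) : (Φ.submatrix id f).det * (Ψ.submatrix id f).det =
      ∑ σ : Equiv.Perm (Fin m), (Φ.submatrix id (f ∘ σ)).det * ∏ i, Ψ i (f (σ i)) := by
    rw [← det_transpose (Ψ.submatrix id f), det_apply' (Ψ.submatrix id f)ᵀ, mul_sum]
    refine sum_congr rfl fun σ _ => ?_
    change _ = ((Φ.submatrix id f).submatrix id σ).det * _
    rw [det_permute']
    simp only [transpose_apply, submatrix_apply, id_eq]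
    ring
  rw [det_mul_transpose_eq_sum_fun, sum_congr rfl fun f _ => hexpand f,
    ← Fintype.sum_prod_type', eq_comm]
  refine sum_of_injOn (fun fσ => fσ.1 ∘ fσ.2) orderEmb_comp_perm_injective.injOn (by simp) ?_
    fun _ _ => rfl
  intro p _ hp
  have hnotInj : ¬ p.Injective := fun hinj => hp <| by
    obtain ⟨f, σ, rfl⟩ := exists_orderEmb_comp_perm hinj
    exact ⟨(f, σ), by simp⟩
  obtain ⟨i, j, hij, hne⟩ := Function.not_injective_iff.mp hnotInj
  rw [det_zero_of_column_eq hne (fun k => by simp [hij]), zero_mul]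

end CauchyBinet

section MinorSum

variable {R α : Type*} [CommRing R] [LinearOrder α]

theorem range_succAboveOrderEmb_trans {m : ℕ} (f : Fin (m + 1) ↪o α) (p : Fin (m + 1)) :
    Set.range (p.succAboveOrderEmb.trans f) = Set.range f \ {f p} := by
  change Set.range (f ∘ p.succAbove) = _
  rw [Set.range_comp, Fin.range_succAbove, ← Set.image_singleton,
    Set.image_compl_eq_range_sdiff_image f.injective]

theorem exists_succAboveOrderEmb_trans_eq {m : ℕ} (g : Fin m ↪o α) {x : α}
    (hx : x ∉ Set.range g) :
    ∃ (f : Fin (m + 1) ↪o α) (p : Fin (m + 1)), f p = x ∧ p.succAboveOrderEmb.trans f = g := by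
  have hx' : x ∉ univ.map g.toEmbedding := by simpa using hx
  set f := (insert x (univ.map g.toEmbedding)).orderEmbOfFin (k := m + 1)
    (by simp [card_insert_of_notMem hx']) with hf
  have hrange : Set.range f = insert x (Set.range g) := by simp [hf]
  obtain ⟨p, hp⟩ : x ∈ Set.range f := hrange ▸ Set.mem_insert x _
  refine ⟨f, p, hp, OrderEmbedding.range_inj.mp ?_⟩
  rw [range_succAboveOrderEmb_trans, hp, hrange, Set.insert_sdiff_of_mem _ (Set.mem_singleton x),
    Set.sdiff_singleton_eq_self hx]

/-- Choosing `m + 1` points and marking one of them is choosing `m` points and another one. -/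
theorem sum_orderEmb_succ_sum {A : Type*} [AddCommMonoid A] [Fintype α] {m : ℕ}
    (H : α → (Fin m ↪o α) → A) :
    ∑ f : Fin (m + 1) ↪o α, ∑ p, H (f p) (p.succAboveOrderEmb.trans f) =
      ∑ g : Fin m ↪o α, ∑ x with x ∉ Set.range g, H x g := by
  rw [← Fintype.sum_prod_type', sum_sigma']
  refine sum_nbij (fun fp => ⟨fp.2.succAboveOrderEmb.trans fp.1, fp.1 fp.2⟩) ?_ ?_ ?_
    fun _ _ => rfl
  · rintro ⟨f, p⟩ -
    exact mem_sigma.mpr ⟨mem_univ _, mem_filter.mpr ⟨mem_univ _, by simp⟩⟩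
  · rintro ⟨f, p⟩ - ⟨f', p'⟩ - h
    obtain ⟨hg, hx⟩ := Sigma.mk.inj h
    have hx := eq_of_heq hx
    have hrange := congrArg (fun g : Fin m ↪o α => insert (f p) (Set.range g)) hg
    simp only at hrange
    rw [range_succAboveOrderEmb_trans, hx, range_succAboveOrderEmb_trans,
      Set.insert_sdiff_singleton, Set.insert_sdiff_singleton,
      Set.insert_eq_of_mem (Set.mem_range_self p'), ← hx,
      Set.insert_eq_of_mem (Set.mem_range_self p)] at hrange
    obtain rfl := OrderEmbedding.range_inj.mp hrange
    exact Prod.ext rfl (f.injective hx)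
  · rintro ⟨g, x⟩ hx
    obtain ⟨f, p, rfl, rfl⟩ := exists_succAboveOrderEmb_trans_eq g (by simpa using hx)
    exact ⟨(f, p), by simp⟩

/-- The sum of the maximal minors of a matrix with linearly ordered columns. -/
noncomputable def minorSum [Fintype α] {m : ℕ} (Φ : Matrix (Fin m) α R) : R :=
  ∑ f : Fin m ↪o α, (Φ.submatrix id f).det

variable (R α) in
/-- The matrix of the weak order plus that of the strict order: `2` below the diagonal, `1` on it
and `0` above it. -/
def orderKernel : Matrix α α R :=
  of fun x y => (if y < x then 2 else 0) + if y = x then 1 else 0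

theorem orderKernel_add_transpose : orderKernel R α + (orderKernel R α)ᵀ = of fun _ _ => 2 := by
  ext x y
  simp only [orderKernel, Matrix.add_apply, of_apply, transpose_apply]
  rcases lt_trichotomy x y with h | rfl | h
  · simp [h, h.not_gt, h.ne, h.ne']
  · simp [one_add_one_eq_two]
  · simp [h, h.not_gt, h.ne, h.ne']

theorem sum_neg_one_pow_mul_ite_lt {m p : ℕ} (hp : p ≤ m) :
    ∑ q : Fin m, (-1 : R) ^ (q : ℕ) * (if (q : ℕ) < p then 2 else 0) = 1 - (-1) ^ p := by
  rw [Fin.sum_univ_eq_sum_range fun q => (-1 : R) ^ q * if q < p then 2 else 0]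
  simp only [mul_ite, mul_zero]
  have hrange : (range m).filter (· < p) = range p := by
    ext q
    simp only [mem_filter, mem_range]
    lia
  rw [← sum_filter, hrange, ← sum_mul, neg_one_geom_sum]
  split_ifs with h
  · simp [h.neg_one_pow]
  · simp [(Nat.not_even_iff_odd.mp h).neg_one_pow, one_add_one_eq_two]

theorem sum_neg_one_pow_mul_orderKernel {m : ℕ} (f : Fin m ↪o α) (p : Fin m) :
    ∑ q : Fin _, (-1) ^ (q : ℕ) * orderKernel R α (f p) (f q) = 1 := by
  simp only [orderKernel, of_apply, f.lt_iff_lt, f.eq_iff_eq, mul_add, sum_add_distrib,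
    Fin.lt_def, sum_neg_one_pow_mul_ite_lt p.is_lt.le]
  simp

theorem sum_neg_one_pow_mul_orderKernel_succAbove {m : ℕ} (f : Fin (m + 1) ↪o α)
    (p : Fin (m + 1)) :
    ∑ q : Fin m, (-1) ^ (q : ℕ) * orderKernel R α (f p) (f (p.succAbove q)) =
      1 - (-1) ^ (p : ℕ) := by
  have hL (q : Fin m) :
      orderKernel R α (f p) (f (p.succAbove q)) = if (q : ℕ) < p then 2 else 0 := by
    simp only [orderKernel, of_apply, f.lt_iff_lt, f.eq_iff_eq, Fin.succAbove_ne, if_false,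
      add_zero, Fin.succAbove_lt_iff_castSucc_lt]
    rfl
  simp only [hL, sum_neg_one_pow_mul_ite_lt (Nat.lt_succ_iff.mp p.is_lt)]

variable [Fintype α]

/-- The alternating vector of minor sums of the matrices obtained by deleting one row. -/
noncomputable def deletedMinorSums {m : ℕ} (Φ : Matrix (Fin (m + 1)) α R) : Fin (m + 1) → R :=
  fun k => (-1) ^ (k : ℕ) * minorSum (Φ.submatrix k.succAbove id)

theorem sum_mul_sum_mul_deletedMinorSums {m : ℕ} (Φ : Matrix (Fin (m + 1)) α R) (c : α → R) :
    ∑ x, c x * ∑ k, Φ k x * deletedMinorSums Φ k =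
      ∑ f : Fin (m + 1) ↪o α, (Φ.submatrix id f).det * ∑ q : Fin _, (-1) ^ (q : ℕ) * c (f q) := by
  let H (x : α) (g : Fin m ↪o α) : R :=
    c x * ∑ k : Fin _, (-1) ^ (k : ℕ) * Φ k x * (Φ.submatrix k.succAbove g).det
  have hmem (g : Fin m ↪o α) (x : α) (hx : x ∈ Set.range g) : H x g = 0 := by
    obtain ⟨q, rfl⟩ := hx
    have hdet := det_succ_column_zero (Φ.submatrix id (Fin.cons (g q) g))
    rw [det_zero_of_column_eq (Fin.succ_ne_zero q) (by simp)] at hdet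
    simpa only [submatrix_apply, Fin.cons_zero, id_eq, submatrix_submatrix, Function.id_comp, H,
      Function.comp_def, Fin.cons_succ] using (congrArg (c (g q) * ·) hdet.symm).trans (mul_zero _)
  have hnotMem (f : Fin (m + 1) ↪o α) (p : Fin (m + 1)) :
      H (f p) (p.succAboveOrderEmb.trans f) =
        (Φ.submatrix id f).det * ((-1) ^ (p : ℕ) * c (f p)) := by
    have hdet : (Φ.submatrix id f).det = ∑ k : Fin (m + 1), (-1) ^ (k + p : ℕ) * Φ k (f p) *
        (Φ.submatrix k.succAbove (p.succAboveOrderEmb.trans f)).det := det_succ_column _ p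
    have hsign : (-1 : R) ^ (p : ℕ) * (-1) ^ (p : ℕ) = 1 := by simp [← mul_pow]
    simp only [H, hdet, sum_mul, mul_sum, pow_add]
    refine sum_congr rfl fun k _ => ?_
    linear_combination (-c (f p) * (-1) ^ (k : ℕ) * Φ k (f p) *
      (Φ.submatrix k.succAbove (p.succAboveOrderEmb.trans f)).det) * hsign
  calc ∑ x, c x * ∑ k, Φ k x * deletedMinorSums Φ k
      = ∑ g : Fin m ↪o α, ∑ x, H x g := by
        rw [sum_comm]
        refine sum_congr rfl fun x _ => ?_
        simp only [H, ← mul_sum, deletedMinorSums, minorSum]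
        rw [sum_comm]
        congr 1
        refine sum_congr rfl fun k _ => ?_
        simp only [mul_sum, submatrix_submatrix]
        exact sum_congr rfl fun g _ => by simp only [Function.comp_id, Function.id_comp]; ring
    _ = ∑ g : Fin m ↪o α, ∑ x with x ∉ Set.range g, H x g := by
        refine sum_congr rfl fun g _ => by
          rw [sum_filter_of_ne (p := (· ∉ Set.range g)) fun x _ hne hx => hne (hmem g x hx)]
    _ = _ := by
        rw [← sum_orderEmb_succ_sum]
        simp only [hnotMem, mul_sum]

end MinorSum

section OrderGram

variable {R α : Type*} [CommRing R]

theorem exists_ringHom_map_mvPolynomialX {m : ℕ} (Φ : Matrix (Fin m) α R) :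
    ∃ g : MvPolynomial (Fin m × α) ℤ →+* R, (mvPolynomialX (Fin m) α ℤ).map g = Φ :=
  ⟨MvPolynomial.eval₂Hom (Int.castRingHom R) fun p => Φ p.1 p.2,
    mvPolynomialX_map_eval₂ _ Φ⟩

variable [LinearOrder α]

theorem sum_neg_one_pow_mul_det_succAbove {m : ℕ} (Φ : Matrix (Fin (m + 1)) α R) (i : Fin (m + 1))
    (f : Fin (m + 2) ↪o α) :
    ∑ p : Fin (m + 2), (-1) ^ (p : ℕ) * Φ i (f p) *
      (Φ.submatrix id (p.succAboveOrderEmb.trans f)).det = 0 := by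
  rw [← det_zero_of_row_eq (M := (of (Fin.cons (Φ i) Φ)).submatrix id f)
    (Fin.succ_ne_zero i).symm rfl, det_succ_row_zero]
  rfl

variable [Fintype α]

/-- The Gram matrix of the rows of `Φ` for the bilinear form with matrix `orderKernel`. -/
def orderGram {m : ℕ} (Φ : Matrix (Fin m) α R) : Matrix (Fin m) (Fin m) R :=
  Φ * orderKernel R α * Φᵀ

theorem orderGram_add_transpose {m : ℕ} (Φ : Matrix (Fin m) α R) :
    orderGram Φ + (orderGram Φ)ᵀ = 2 • vecMulVec (Φ *ᵥ 1) (Φ *ᵥ 1) := by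
  have htwo : (of fun _ _ : α => (2 : R)) = 2 • vecMulVec 1 1 := by
    ext; simp
  rw [orderGram, transpose_mul, transpose_mul, transpose_transpose, ← Matrix.mul_assoc,
    ← Matrix.add_mul, ← Matrix.mul_add, orderKernel_add_transpose, htwo, Matrix.mul_smul,
    Matrix.smul_mul, mul_vecMulVec, vecMulVec_mul, vecMul_transpose]

theorem sum_mul_det_mul_sum_orderKernel {m : ℕ} (Φ : Matrix (Fin (m + 1)) α R) (i : Fin (m + 1)) :
    ∑ f : Fin (m + 1) ↪o α, ∑ x, Φ i x * (Φ.submatrix id f).det *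
        ∑ q : Fin (m + 1), (-1) ^ (q : ℕ) * orderKernel R α x (f q) =
      ∑ f : Fin (m + 1) ↪o α, ∑ x, Φ i x * (Φ.submatrix id f).det := by
  let defect (x : α) (f : Fin (m + 1) ↪o α) : R := Φ i x * (Φ.submatrix id f).det *
    (1 - ∑ q : Fin (m + 1), (-1) ^ (q : ℕ) * orderKernel R α x (f q))
  have hrange (f : Fin (m + 1) ↪o α) :
      ∑ x, defect x f = ∑ x with x ∉ Set.range f, defect x f := by
    rw [sum_filter_of_ne (p := (· ∉ Set.range f))]
    rintro _ - hne ⟨p, rfl⟩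
    exact hne (by simp [defect, sum_neg_one_pow_mul_orderKernel])
  have hinsert (f : Fin (m + 2) ↪o α) (p : Fin (m + 2)) :
      defect (f p) (p.succAboveOrderEmb.trans f) = (-1) ^ (p : ℕ) * Φ i (f p) *
        (Φ.submatrix id (p.succAboveOrderEmb.trans f)).det := by
    simp only [defect, RelEmbedding.coe_trans, Function.comp_apply, Fin.succAboveOrderEmb_apply,
      sum_neg_one_pow_mul_orderKernel_succAbove]
    ring
  have hdefect : ∑ f : Fin (m + 1) ↪o α, ∑ x, defect x f = 0 := by
    simp only [hrange, ← sum_orderEmb_succ_sum, hinsert, sum_neg_one_pow_mul_det_succAbove,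
      sum_const_zero]
  simp only [defect, mul_sub, mul_one, sum_sub_distrib] at hdefect
  exact (sub_eq_zero.mp hdefect).symm

theorem orderGram_mulVec_deletedMinorSums {m : ℕ} (Φ : Matrix (Fin (m + 1)) α R) :
    orderGram Φ *ᵥ deletedMinorSums Φ = minorSum Φ • (Φ *ᵥ 1) := by
  ext i
  calc (orderGram Φ *ᵥ deletedMinorSums Φ) i
      = ∑ x, Φ i x * ∑ y, orderKernel R α x y * ∑ k, Φ k y * deletedMinorSums Φ k := by
        rw [orderGram, ← mulVec_mulVec, ← mulVec_mulVec]
        simp only [mulVec, dotProduct, transpose_apply]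
    _ = ∑ f : Fin (m + 1) ↪o α, ∑ x, Φ i x * (Φ.submatrix id f).det *
          ∑ q : Fin (m + 1), (-1) ^ (q : ℕ) * orderKernel R α x (f q) := by
        simp only [sum_mul_sum_mul_deletedMinorSums]
        simp only [mul_sum, mul_assoc]
        exact sum_comm
    _ = (minorSum Φ • (Φ *ᵥ 1)) i := by
        rw [sum_mul_det_mul_sum_orderKernel]
        simp only [minorSum, Pi.smul_apply, smul_eq_mul, mulVec, dotProduct, Pi.one_apply, mul_one,
          sum_mul, mul_sum, mul_comm]

theorem orderGram_submatrix {m n : ℕ} (Φ : Matrix (Fin m) α R) (e : Fin n → Fin m) :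
    orderGram (Φ.submatrix e id) = (orderGram Φ).submatrix e e := by
  simp only [orderGram, transpose_submatrix]
  rfl

theorem det_orderGram_of_ne_zero [IsDomain R] (h_two : (2 : R) ≠ 0) {m : ℕ}
    (Φ : Matrix (Fin (m + 1)) α R)
    (hdel : (orderGram (Φ.submatrix Fin.succ id)).det = minorSum (Φ.submatrix Fin.succ id) ^ 2)
    (hdel_ne : minorSum (Φ.submatrix Fin.succ id) ≠ 0) (hdet : (orderGram Φ).det ≠ 0) :
    (orderGram Φ).det = minorSum Φ ^ 2 := by
  -- The quadratic form of `M` at the first row `v` of its adjugate only sees the symmetric part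
  -- `s sᵀ`, while `M` sends the vector `p` of deleted minor sums to a multiple of `s`; eliminating
  -- `v ⬝ᵥ s` from the two resulting equations gives the claim.
  set M := orderGram Φ with hM
  set s := Φ *ᵥ (1 : α → R)
  set p := deletedMinorSums Φ
  set v := M.adjugate 0
  have hv : v ᵥ* M = M.det • Pi.single 0 1 := by
    ext j
    have h := congrFun (congrFun M.adjugate_mul 0) j
    simpa [vecMul, dotProduct, Matrix.mul_apply, one_apply, Pi.single_apply, eq_comm] using h
  have hp0 : p 0 = minorSum (Φ.submatrix Fin.succ id) := by simp [p, deletedMinorSums]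
  have hv0 : v 0 = p 0 ^ 2 := by
    rw [hp0, ← hdel, orderGram_submatrix]
    simp only [v, adjugate_fin_succ_eq_det_submatrix]
    simp [hM]
  have hquad : M.det * p 0 ^ 2 = (v ⬝ᵥ s) ^ 2 := by
    have h1 : v ᵥ* M ⬝ᵥ v = M.det * p 0 ^ 2 := by simp [hv, hv0]
    have h2 : v ᵥ* Mᵀ ⬝ᵥ v = M.det * p 0 ^ 2 := by
      rw [vecMul_transpose, dotProduct_comm, dotProduct_mulVec, h1]
    have h3 := congrArg (fun A => v ᵥ* A ⬝ᵥ v) (orderGram_add_transpose Φ)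
    simp only [vecMul_add, add_dotProduct, ← hM, h1, h2, vecMul_smul, vecMul_vecMulVec,
      smul_dotProduct, smul_eq_mul] at h3
    refine mul_left_cancel₀ h_two ?_
    rw [dotProduct_comm s v] at h3
    linear_combination h3
  have hlin : M.det * p 0 = minorSum Φ * (v ⬝ᵥ s) := by
    have h : v ᵥ* M ⬝ᵥ p = M.det * p 0 := by simp [hv]
    rw [← h, ← dotProduct_mulVec, orderGram_mulVec_deletedMinorSums, dotProduct_smul, smul_eq_mul]
  refine mul_right_cancel₀ (mul_ne_zero hdet (pow_ne_zero 2 (hp0 ▸ hdel_ne))) ?_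
  linear_combination (M.det * p 0 + minorSum Φ * (v ⬝ᵥ s)) * hlin - minorSum Φ ^ 2 * hquad

section Map

variable {S : Type*} [CommRing S] (g : R →+* S)

theorem map_minorSum {m : ℕ} (Φ : Matrix (Fin m) α R) :
    g (minorSum Φ) = minorSum (Φ.map g) := by
  simp [minorSum, RingHom.map_det, submatrix_map]

theorem map_det_orderGram {m : ℕ} (Φ : Matrix (Fin m) α R) :
    g (orderGram Φ).det = (orderGram (Φ.map g)).det := by
  have hL : (orderKernel R α).map g = orderKernel S α := by
    ext x y
    simp [orderKernel, apply_ite g, map_ofNat]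
  simp only [orderGram, RingHom.map_det, RingHom.mapMatrix_apply, Matrix.map_mul, hL,
    transpose_map]

end Map

theorem det_orderGram_one_submatrix {m : ℕ} (e : Fin m ↪o α) :
    (orderGram ((1 : Matrix α α R).submatrix e id)).det = 1 := by
  have hgram : orderGram ((1 : Matrix α α R).submatrix e id) = orderKernel R (Fin m) := by
    ext i j
    simp [orderGram, Matrix.mul_apply, one_apply, orderKernel]
  rw [hgram, det_of_isLowerTriangular]
  · simp [orderKernel]
  · intro i j (h : i < j)
    simp [orderKernel, h.not_gt, h.ne']

theorem det_orderGram_of_mvPolynomialX {m : ℕ}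
    (h : (orderGram (mvPolynomialX (Fin m) α ℤ)).det = minorSum (mvPolynomialX (Fin m) α ℤ) ^ 2)
    (Φ : Matrix (Fin m) α R) : (orderGram Φ).det = minorSum Φ ^ 2 := by
  obtain ⟨g, hg⟩ := exists_ringHom_map_mvPolynomialX Φ
  rw [← hg, ← map_det_orderGram, h, map_pow, map_minorSum]

theorem det_orderGram_mvPolynomialX (m : ℕ) :
    (orderGram (mvPolynomialX (Fin m) α ℤ)).det = minorSum (mvPolynomialX (Fin m) α ℤ) ^ 2 := by
  induction m with
  | zero =>
    have : Unique (Fin 0 ↪o α) := ⟨⟨OrderEmbedding.ofIsEmpty⟩, fun f => by ext x; exact x.elim0⟩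
    simp [minorSum]
  | succ m ih =>
    set X := mvPolynomialX (Fin (m + 1)) α ℤ with hX
    rcases isEmpty_or_nonempty (Fin (m + 1) ↪o α) with hempty | ⟨⟨e⟩⟩
    · rw [orderGram, det_mul_transpose_eq_sum_orderEmb]
      simp [minorSum]
    obtain ⟨g, hg⟩ := exists_ringHom_map_mvPolynomialX ((1 : Matrix α α ℤ).submatrix e id)
    refine det_orderGram_of_ne_zero (by simp) X (det_orderGram_of_mvPolynomialX ih _) ?_ ?_
    · intro h
      have hmap := map_minorSum g (X.submatrix Fin.succ id)
      rw [h, ← submatrix_map, hX, hg, map_zero] at hmap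
      have hsq : minorSum (((1 : Matrix α α ℤ).submatrix e id).submatrix Fin.succ id) ^ 2 = 1 := by
        rw [← det_orderGram_of_mvPolynomialX ih]
        exact det_orderGram_one_submatrix ((Fin.succOrderEmb m).trans e)
      rw [← hmap, zero_pow two_ne_zero] at hsq
      exact zero_ne_one hsq
    · intro h
      have hmap := map_det_orderGram g X
      rw [h, hX, hg, det_orderGram_one_submatrix, map_zero] at hmap
      exact zero_ne_one hmap

/-- The determinantal form of the **Ishikawa–Wakayama minor summation formula**, uniform in the
parity of `m`. -/
theorem det_orderGram {m : ℕ} (Φ : Matrix (Fin m) α R) : (orderGram Φ).det = minorSum Φ ^ 2 :=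
  det_orderGram_of_mvPolynomialX (det_orderGram_mvPolynomialX m) Φ

theorem sum_det_mul_det_mul_orderKernel {m : ℕ} (Φ : Matrix (Fin m) α R) :
    ∑ f : Fin m ↪o α, (Φ.submatrix id f).det * ((Φ * orderKernel R α).submatrix id f).det =
      (∑ f : Fin m ↪o α, (Φ.submatrix id f).det) ^ 2 := by
  rw [← minorSum, ← det_orderGram, orderGram, det_mul_transpose_eq_sum_orderEmb]
  simp only [mul_comm]

end OrderGram

/-! ### Central Appell sequences -/

/-- Central Appell sequences: `P n` is an `n`-th iterated antiderivative of `1` for the central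
difference, and has the parity of `n`. -/
structure IsCentralAppell (P : ℕ → ℚ → ℚ) : Prop where
  zero_eq_one : ∀ x, P 0 x = 1
  succ_sub : ∀ n x, P (n + 1) (x + 1 / 2) - P (n + 1) (x - 1 / 2) = P n x
  neg : ∀ n x, P n (-x) = (-1) ^ n * P n x

/-- The central binomial polynomials `x ↦ C(x + (n - 1) / 2, n)`. -/
noncomputable def centralChoose (n : ℕ) (x : ℚ) : ℚ :=
  Ring.choose (x + (n - 1) / 2) n

theorem isCentralAppell_centralChoose : IsCentralAppell centralChoose where
  zero_eq_one x := Ring.choose_zero_right _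
  succ_sub n x := by
    have h := Ring.choose_succ_succ (x + ((n : ℚ) - 1) / 2) n
    simp only [centralChoose]
    push_cast
    rw [show x + 1 / 2 + ((n : ℚ) + 1 - 1) / 2 = x + (n - 1) / 2 + 1 by ring, h,
      show x - 1 / 2 + ((n : ℚ) + 1 - 1) / 2 = x + (n - 1) / 2 by ring, add_sub_cancel_right]
  neg n x := by
    have h := Ring.choose_neg (x - ((n : ℚ) - 1) / 2) n
    rw [show -(x - ((n : ℚ) - 1) / 2) = -x + (n - 1) / 2 by ring,
      show x - ((n : ℚ) - 1) / 2 + n - 1 = x + (n - 1) / 2 by ring] at h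
    rw [centralChoose, h, Int.negOnePow_def, Units.smul_def]
    simp [centralChoose]

theorem centralChoose_eq_zero (i e : ℕ) : centralChoose (2 * i + 1 + e) (e / 2) = 0 := by
  have h : (e : ℚ) / 2 + (((2 * i + 1 + e : ℕ) : ℚ) - 1) / 2 = (i + e : ℕ) := by
    push_cast
    ring
  rw [centralChoose, h, Ring.choose_natCast, Nat.choose_eq_zero_of_lt (by lia), Nat.cast_zero]

/-- The means of `centralChoose` over the points at distance `1 / 2`. -/
noncomputable def meanCentralChoose (n : ℕ) (x : ℚ) : ℚ :=
  (centralChoose n (x + 1 / 2) + centralChoose n (x - 1 / 2)) / 2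

theorem isCentralAppell_meanCentralChoose : IsCentralAppell meanCentralChoose where
  zero_eq_one x := by simp [meanCentralChoose, isCentralAppell_centralChoose.zero_eq_one]
  succ_sub n x := by
    have h₁ := isCentralAppell_centralChoose.succ_sub n (x + 1 / 2)
    have h₂ := isCentralAppell_centralChoose.succ_sub n (x - 1 / 2)
    rw [show x - 1 / 2 + 1 / 2 = x + 1 / 2 - 1 / 2 by ring] at h₂
    simp only [meanCentralChoose]
    rw [show x - 1 / 2 + 1 / 2 = x + 1 / 2 - 1 / 2 by ring]
    linear_combination (h₁ + h₂) / 2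
  neg n x := by
    have h₁ := isCentralAppell_centralChoose.neg n (x - 1 / 2)
    have h₂ := isCentralAppell_centralChoose.neg n (x + 1 / 2)
    rw [neg_sub'] at h₁
    rw [neg_add'] at h₂
    simp only [meanCentralChoose]
    rw [← sub_neg_eq_add (-x), h₁, h₂]
    ring

theorem meanCentralChoose_succ_zero (n : ℕ) : meanCentralChoose (n + 1) 0 = 0 := by
  have h := isCentralAppell_centralChoose.neg (n + 1) (1 / 2)
  rcases Nat.even_or_odd' n with ⟨k, rfl | rfl⟩
  · rw [meanCentralChoose, zero_sub, zero_add, h, Odd.neg_one_pow ⟨k, rfl⟩]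
    ring
  · have hzero := centralChoose_eq_zero k 1
    rw [Nat.cast_one] at hzero
    rw [meanCentralChoose, zero_sub, zero_add, h, hzero, mul_zero, add_zero, zero_div]

section Det

variable {R : Type*} [CommRing R] {k : ℕ}

theorem det_eq_of_row_zero_eq_one (A : Matrix (Fin (k + 1)) (Fin (k + 1)) R)
    (hA : ∀ j, A 0 j = 1) :
    A.det = (-1) ^ k * (of fun i j : Fin k => A i.succ j.castSucc - A i.succ j.succ).det := by
  let B : Matrix (Fin (k + 1)) (Fin (k + 1)) R :=
    of fun i => Fin.cons (A i 0) fun j => A i j.succ - A i j.castSucc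
  have hAB : A.det = B.det :=
    det_eq_of_forall_col_eq_smul_add_pred 1 (fun i => by simp [B]) fun i j => by simp [B]
  have hB : B.submatrix Fin.succ Fin.succ =
      -of fun i j : Fin k => A i.succ j.castSucc - A i.succ j.succ := by
    ext
    simp [B]
  have hB_zero : B 0 0 = 1 := hA 0
  have hB_succ (j : Fin k) : B 0 j.succ = 0 := by simp [B, hA]
  rw [hAB, det_succ_row_zero, Fin.sum_univ_succ]
  simp only [hB_zero, hB_succ, mul_zero, zero_mul, sum_const_zero, add_zero, Fin.val_zero, pow_zero,
    one_mul, Fin.succAbove_zero, hB, det_neg, Fintype.card_fin]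

theorem det_sub_succ_of_last_eq_zero (F : Fin k → Fin (k + 1) → R)
    (hF : ∀ i, F i (Fin.last k) = 0) :
    (of fun i j : Fin k => F i j.castSucc - F i j.succ).det =
      (of fun i j : Fin k => F i j.castSucc).det := by
  let A : Matrix (Fin (k + 1)) (Fin (k + 1)) R := of (Fin.cons 1 F)
  have hdiff := det_eq_of_row_zero_eq_one A fun _ => rfl
  have hlast : A.det = (-1) ^ k * (of fun i j : Fin k => F i j.castSucc).det := by
    rw [det_succ_column A (Fin.last k), Fin.sum_univ_succ]
    have hA_succ (i : Fin k) : A i.succ (Fin.last k) = 0 := hF i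
    have hA_zero : A 0 (Fin.last k) = 1 := rfl
    have hA_sub : A.submatrix Fin.succ Fin.castSucc = of fun i j : Fin k => F i j.castSucc := rfl
    simp [hA_zero, hA_succ, hA_sub]
  have hunit : IsUnit ((-1 : R) ^ k) := (isUnit_one.neg).pow k
  exact hunit.mul_left_cancel (hdiff.symm.trans hlast)

end Det

theorem sum_Icc_eq_sub {H h : ℚ → ℚ} (hH : ∀ x, H (x + 1 / 2) - H (x - 1 / 2) = h x) {u v : ℕ}
    (huv : u ≤ v) (c : ℚ) :
    ∑ t ∈ Icc u v, h (t + c) = H (v + c + 1 / 2) - H (u + c - 1 / 2) := by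
  induction v, huv using Nat.le_induction with
  | base => rw [Icc_self, sum_singleton, hH]
  | succ v huv ih =>
    rw [sum_Icc_succ_top (by lia), ih, ← hH, Nat.cast_succ,
      show (v : ℚ) + 1 + c - 1 / 2 = v + c + 1 / 2 by ring]
    ring

theorem sum_piFinset_det_eq {k : ℕ} {h H : Fin k → ℚ → ℚ}
    (hH : ∀ i x, H i (x + 1 / 2) - H i (x - 1 / 2) = h i x) {l : ℕ → ℕ} (hl : Antitone l) (c : ℚ) :
    ∑ μ ∈ Fintype.piFinset fun p : Fin k => Icc (l (p + 1)) (l p),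
        (of fun i p => h i (μ p - (p : ℕ) + c)).det =
      (of fun i p : Fin k => H i (l p - (p : ℕ) + c + 1 / 2) -
        H i (l (p + 1) - ((p : ℕ) + 1) + c + 1 / 2)).det := by
  have hrow : (of fun i p : Fin k => H i (l p - (p : ℕ) + c + 1 / 2) -
        H i (l (p + 1) - ((p : ℕ) + 1) + c + 1 / 2))ᵀ =
      fun p : Fin k => ∑ t ∈ Icc (l (p + 1)) (l p), fun i => h i (t - (p : ℕ) + c) := by
    ext p i
    simp only [transpose_apply, of_apply, Finset.sum_apply]
    have hshift (t : ℚ) : t - (p : ℕ) + c = t + (c - (p : ℕ)) := by ring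
    have hshift_succ : (l (p + 1) : ℚ) - ((p : ℕ) + 1) + c + 1 / 2 =
        l (p + 1) + (c - (p : ℕ)) - 1 / 2 := by ring
    simp only [hshift_succ, hshift]
    exact (sum_Icc_eq_sub (hH i) (hl (p : ℕ).le_succ) _).symm
  rw [← det_transpose, hrow]
  change _ = (detRowAlternating (R := ℚ)).toMultilinearMap _
  rw [MultilinearMap.map_sum_finset]
  exact sum_congr rfl fun μ _ => by rw [← det_transpose]; rfl

/-! ### Gelfand–Tsetlin patterns -/

/-- `μ` interlaces with `l`: `l 0 ≥ μ 0 ≥ l 1 ≥ μ 1 ≥ ⋯`. -/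
def Interlaces (l μ : ℕ → ℕ) : Prop :=
  ∀ p, l (p + 1) ≤ μ p ∧ μ p ≤ l p

theorem Interlaces.antitone {l μ : ℕ → ℕ} (h : Interlaces l μ) : Antitone μ :=
  antitone_nat_of_succ_le fun p => (h (p + 1)).2.trans (h p).1

/-- A Gelfand–Tsetlin pattern of height `n` and profile `s`: consecutive rows interlace, and the
`d`-th row has at most `s (n - d)` nonzero entries. The profile `id` gives triangular patterns, the
profile `(· / 2)` gives the half-triangular ones. -/
structure IsPattern (s : ℕ → ℕ) (n : ℕ) (q : ℕ → ℕ → ℕ) : Prop where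
  interlaces : ∀ d, Interlaces (q d) (q (d + 1))
  eq_zero : ∀ d p, s (n - d) ≤ p → q d p = 0

theorem IsPattern.antitone {s : ℕ → ℕ} {n : ℕ} {q : ℕ → ℕ → ℕ} (hq : IsPattern s n q) (d : ℕ) :
    Antitone (q d) :=
  antitone_nat_of_succ_le fun p => (hq.interlaces d p).1.trans (hq.interlaces d p).2

theorem IsPattern.apply_le_apply_zero {s : ℕ → ℕ} {n : ℕ} {q : ℕ → ℕ → ℕ} (hq : IsPattern s n q)
    (d p : ℕ) : q d p ≤ q 0 p :=
  antitone_nat_of_succ_le (f := fun d => q d p) (fun d => (hq.interlaces d p).2) d.zero_le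

/-- The number of patterns with a given top row. -/
noncomputable def patternCount (s : ℕ → ℕ) (n : ℕ) (l : ℕ → ℕ) : ℕ :=
  Nat.card {q // IsPattern s n q ∧ q 0 = l}

/-- If the values of `f` satisfying `Q` are parametrised by `ρ`, then the elements satisfying
`Q ∘ f` are partitioned into the fibres of `f` over the values of `ρ`. -/
noncomputable def sigmaFiberEquiv {X Y ι : Type*} {P : X → Prop} {Q : Y → Prop} {f : X → Y}
    {ρ : ι → Y} (hρ : ρ.Injective) (hQ : ∀ x, P x → (Q (f x) ↔ ∃ z, f x = ρ z)) :
    (Σ z, {x // P x ∧ f x = ρ z}) ≃ {x // P x ∧ Q (f x)} :=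
  Equiv.ofBijective (fun y => ⟨y.2, y.2.2.1, (hQ _ y.2.2.1).mpr ⟨y.1, y.2.2.2⟩⟩) <| by
    constructor
    · rintro ⟨z, x, hx, hz⟩ ⟨z', x', hx', hz'⟩ h
      obtain rfl : x = x' := congrArg Subtype.val h
      obtain rfl := hρ (hz.symm.trans hz')
      rfl
    · rintro ⟨x, hx, hQx⟩
      obtain ⟨z, hz⟩ := (hQ x hx).mp hQx
      exact ⟨⟨z, x, hx, hz⟩, rfl⟩

/-- Extension of a finite sequence by zeros. -/
noncomputable def padZero {k : ℕ} (μ : Fin k → ℕ) : ℕ → ℕ :=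
  Function.extend Fin.val μ 0

theorem padZero_val {k : ℕ} (μ : Fin k → ℕ) (p : Fin k) : padZero μ p = μ p :=
  Fin.val_injective.extend_apply μ 0 p

theorem padZero_of_le {k : ℕ} (μ : Fin k → ℕ) {p : ℕ} (hp : k ≤ p) : padZero μ p = 0 :=
  Function.extend_apply' _ _ _ fun ⟨j, hj⟩ => by lia

theorem padZero_injective (k : ℕ) : Function.Injective (padZero (k := k)) :=
  Function.extend_injective Fin.val_injective 0

theorem exists_eq_padZero_iff {k : ℕ} {l : ℕ → ℕ} (hl : ∀ p, k < p → l p = 0) {μ : ℕ → ℕ}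
    (hμ : ∀ p, k ≤ p → μ p = 0) :
    Interlaces l μ ↔ ∃ ν : Fintype.piFinset fun p : Fin k => Icc (l (p + 1)) (l p),
      μ = padZero ν.1 := by
  constructor
  · intro h
    refine ⟨⟨fun p => μ p, Fintype.mem_piFinset.mpr fun p => mem_Icc.mpr (h p)⟩, funext fun p => ?_⟩
    rcases lt_or_ge p k with hp | hp
    · exact (padZero_val (fun p : Fin k => μ p) ⟨p, hp⟩).symm
    · rw [hμ p hp, padZero_of_le _ hp]
  · rintro ⟨⟨ν, hν⟩, rfl⟩ p
    rcases lt_or_ge p k with hp | hp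
    · rw [show padZero ν p = ν ⟨p, hp⟩ from padZero_val ν ⟨p, hp⟩]
      exact mem_Icc.mp (Fintype.mem_piFinset.mp hν ⟨p, hp⟩)
    · simp [padZero_of_le ν hp, hl (p + 1) (by lia)]

section Count

variable {s : ℕ → ℕ} {n : ℕ} {l : ℕ → ℕ}

/-- Removing the top row. -/
def peelEquiv (hl : ∀ p, s (n + 1) ≤ p → l p = 0) :
    {q // IsPattern s (n + 1) q ∧ q 0 = l} ≃ {q // IsPattern s n q ∧ Interlaces l (q 0)} where
  toFun q := ⟨fun d => q.1 (d + 1), ⟨fun d => q.2.1.interlaces (d + 1), fun d p hp =>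
    q.2.1.eq_zero (d + 1) p (by simpa using hp)⟩, by simpa only [q.2.2] using q.2.1.interlaces 0⟩
  invFun q := ⟨fun d => d.casesOn l q.1, ⟨fun | 0 => q.2.2 | d + 1 => q.2.1.interlaces d,
    fun | 0 => hl | d + 1 => fun p hp => q.2.1.eq_zero d p (by simpa using hp)⟩, rfl⟩
  left_inv := by
    rintro ⟨q, hq, rfl⟩
    exact Subtype.ext (funext fun | 0 => rfl | d + 1 => rfl)
  right_inv _ := rfl

/-- Sorting the patterns by their second row. -/
noncomputable def patternSuccEquiv (hs : s (n + 1) ≤ s n + 1) (hl : ∀ p, s (n + 1) ≤ p → l p = 0) :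
    (Σ μ : Fintype.piFinset fun p : Fin (s n) => Icc (l (p + 1)) (l p),
      {q // IsPattern s n q ∧ q 0 = padZero μ.1}) ≃ {q // IsPattern s (n + 1) q ∧ q 0 = l} :=
  (sigmaFiberEquiv ((padZero_injective _).comp Subtype.val_injective) fun q hq =>
    exists_eq_padZero_iff (fun p hp => hl p (by lia)) (hq.eq_zero 0)).trans (peelEquiv hl).symm

theorem IsPattern.eq_zero_of_zero (h₀ : s 0 = 0) {q : ℕ → ℕ → ℕ} (hq : IsPattern s 0 q) :
    q = 0 := by
  ext d p
  exact hq.eq_zero d p (by simp [h₀])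

theorem finite_pattern (h₀ : s 0 = 0) (hs : ∀ n, s (n + 1) ≤ s n + 1) (n : ℕ) (l : ℕ → ℕ) :
    Finite {q // IsPattern s n q ∧ q 0 = l} := by
  induction n generalizing l with
  | zero =>
    have : Subsingleton {q // IsPattern s 0 q ∧ q 0 = l} := ⟨fun q q' => Subtype.ext <| by
      rw [q.2.1.eq_zero_of_zero h₀, q'.2.1.eq_zero_of_zero h₀]⟩
    infer_instance
  | succ n ih =>
    by_cases hl : ∀ p, s (n + 1) ≤ p → l p = 0
    · exact .of_equiv _ (patternSuccEquiv (hs n) hl)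
    · have : IsEmpty {q // IsPattern s (n + 1) q ∧ q 0 = l} :=
        ⟨fun q => hl (q.2.2 ▸ q.2.1.eq_zero 0)⟩
      infer_instance

theorem patternCount_zero (h₀ : s 0 = 0) : patternCount s 0 0 = 1 := by
  refine Nat.card_eq_one_iff_unique.mpr ⟨⟨fun q q' => Subtype.ext ?_⟩,
    ⟨⟨0, ⟨fun _ _ => by simp, fun _ _ _ => rfl⟩, rfl⟩⟩⟩
  rw [q.2.1.eq_zero_of_zero h₀, q'.2.1.eq_zero_of_zero h₀]

theorem patternCount_succ (h₀ : s 0 = 0) (hs : ∀ n, s (n + 1) ≤ s n + 1)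
    (hl : ∀ p, s (n + 1) ≤ p → l p = 0) :
    patternCount s (n + 1) l =
      ∑ μ ∈ Fintype.piFinset fun p : Fin (s n) => Icc (l (p + 1)) (l p),
        patternCount s n (padZero μ) := by
  have (μ : ℕ → ℕ) := finite_pattern h₀ hs n μ
  rw [patternCount, ← Nat.card_congr (patternSuccEquiv (hs n) hl), Nat.card_sigma]
  exact sum_coe_sort (Fintype.piFinset _) fun μ => patternCount s n (padZero μ)

/-- The number of patterns of height `n` whose top row `l` has at most `k` nonzero entries is
`ε` times the determinant of the functions `f` at the points `l p - p + c`. -/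
def CountIsDet (s : ℕ → ℕ) (n k : ℕ) (ε : ℚ) (f : Fin k → ℚ → ℚ) (c : ℚ) : Prop :=
  s n = k ∧ ∀ l : ℕ → ℕ, Antitone l → (∀ p, k ≤ p → l p = 0) →
    (patternCount s n l : ℚ) = ε * (of fun i p : Fin k => f i (l p - (p : ℕ) + c)).det

variable {k : ℕ} {ε c : ℚ}

theorem CountIsDet.zero (h₀ : s 0 = 0) (f : Fin 0 → ℚ → ℚ) (c : ℚ) : CountIsDet s 0 0 1 f c := by
  refine ⟨h₀, fun l _ hl => ?_⟩
  obtain rfl : l = 0 := funext fun p => hl p p.zero_le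
  simp [patternCount_zero h₀]

theorem CountIsDet.patternCount_succ_eq {h H : Fin k → ℚ → ℚ} (hn : CountIsDet s n k ε h c)
    (h₀ : s 0 = 0) (hs : ∀ n, s (n + 1) ≤ s n + 1)
    (hH : ∀ i x, H i (x + 1 / 2) - H i (x - 1 / 2) = h i x) (hl : Antitone l)
    (hl₀ : ∀ p, s (n + 1) ≤ p → l p = 0) :
    (patternCount s (n + 1) l : ℚ) = ε * (of fun i p : Fin k =>
      H i (l p - (p : ℕ) + (c + 1 / 2)) - H i (l (p + 1) - ((p : ℕ) + 1) + (c + 1 / 2))).det := by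
  obtain ⟨rfl, hcount⟩ := hn
  have hcount_pad (μ) (hμ : μ ∈ Fintype.piFinset fun p : Fin (s n) => Icc (l (p + 1)) (l p)) :
      (patternCount s n (padZero μ) : ℚ) =
        ε * (of fun i p : Fin (s n) => h i (μ p - (p : ℕ) + c)).det := by
    have hinter : Interlaces l (padZero μ) :=
      (exists_eq_padZero_iff (fun p hp => hl₀ p ((hs n).trans hp))
        fun p hp => padZero_of_le μ hp).mpr ⟨⟨μ, hμ⟩, rfl⟩
    simp only [hcount _ hinter.antitone fun _ hp => padZero_of_le μ hp, padZero_val]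
  rw [patternCount_succ h₀ hs hl₀, Nat.cast_sum, sum_congr rfl hcount_pad, ← mul_sum,
    sum_piFinset_det_eq hH hl]
  simp only [add_assoc]

theorem CountIsDet.succ_of_lt {h : Fin k → ℚ → ℚ} {f : Fin (k + 1) → ℚ → ℚ}
    (hn : CountIsDet s n k ε h c) (h₀ : s 0 = 0) (hs : ∀ n, s (n + 1) ≤ s n + 1)
    (hk : s (n + 1) = k + 1) (hf_zero : ∀ x, f 0 x = 1)
    (hf : ∀ (i : Fin k) x, f i.succ (x + 1 / 2) - f i.succ (x - 1 / 2) = h i x) :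
    CountIsDet s (n + 1) (k + 1) (ε * (-1) ^ k) f (c + 1 / 2) := by
  refine ⟨hk, fun l hl hl₀ => ?_⟩
  rw [hn.patternCount_succ_eq h₀ hs hf hl (hk ▸ hl₀),
    det_eq_of_row_zero_eq_one _ fun j => hf_zero _, mul_assoc, ← mul_assoc ((-1) ^ k),
    ← mul_pow, neg_one_mul, neg_neg, one_pow, one_mul]
  simp

theorem CountIsDet.succ_of_eq {h H : Fin k → ℚ → ℚ}
    (hn : CountIsDet s n k ε h c) (h₀ : s 0 = 0) (hs : ∀ n, s (n + 1) ≤ s n + 1)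
    (hk : s (n + 1) = k) (hH : ∀ i x, H i (x + 1 / 2) - H i (x - 1 / 2) = h i x)
    (hH_zero : ∀ i, H i (-k + (c + 1 / 2)) = 0) :
    CountIsDet s (n + 1) k ε H (c + 1 / 2) := by
  refine ⟨hk, fun l hl hl₀ => ?_⟩
  rw [hn.patternCount_succ_eq h₀ hs hH hl (hk ▸ hl₀)]
  have hlast (i : Fin k) : H i (l k - (k : ℕ) + (c + 1 / 2)) = 0 := by
    rw [hl₀ k le_rfl, Nat.cast_zero, zero_sub, hH_zero]
  have hdet := det_sub_succ_of_last_eq_zero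
    (fun (i : Fin k) (p : Fin (k + 1)) => H i (l p - (p : ℕ) + (c + 1 / 2))) hlast
  simpa using congrArg (ε * ·) hdet

end Count

theorem neg_one_pow_choose_succ_two (n : ℕ) :
    (-1 : ℚ) ^ (n + 1).choose 2 = (-1) ^ n.choose 2 * (-1) ^ n := by
  rw [Nat.choose_succ_succ', Nat.choose_one_right, pow_add, mul_comm]

/-- The shift `c` is free, so that the points can be centred at `0`. -/
theorem countIsDet_triangular {P : ℕ → ℚ → ℚ} (hP : IsCentralAppell P) (n : ℕ) (c : ℚ) :
    CountIsDet id n n ((-1) ^ n.choose 2) (fun i => P i) c := by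
  induction n generalizing c with
  | zero => simpa using CountIsDet.zero rfl _ c
  | succ n ih =>
    have h := (ih (c - 1 / 2)).succ_of_lt (f := fun i => P i) rfl (fun _ => le_rfl) rfl
      hP.zero_eq_one fun i => hP.succ_sub i
    rwa [sub_add_cancel, ← neg_one_pow_choose_succ_two] at h

theorem countIsDet_half {P : ℕ → ℚ → ℚ} (hP : IsCentralAppell P) (k : ℕ) {e : ℕ} (he : e < 2) :
    CountIsDet (· / 2) (2 * k + e) k ((-1) ^ k.choose 2) (fun i => P (2 * i + e))
      (k + (e - 1) / 2) := by
  have hs (n : ℕ) : (n + 1) / 2 ≤ n / 2 + 1 := by lia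
  have hodd (k : ℕ)
      (h : CountIsDet (· / 2) (2 * k) k ((-1) ^ k.choose 2) (fun i => P (2 * i)) (k - 1 / 2)) :
      CountIsDet (· / 2) (2 * k + 1) k ((-1) ^ k.choose 2) (fun i => P (2 * i + 1)) k := by
    have hP_zero (i : ℕ) : P (2 * i + 1) 0 = 0 := by
      have h := hP.neg (2 * i + 1) 0
      rw [neg_zero, Odd.neg_one_pow ⟨i, rfl⟩] at h
      linarith
    simpa using h.succ_of_eq (H := fun i => P (2 * i + 1)) rfl hs (by lia)
      (fun i => hP.succ_sub (2 * i)) fun i => by simp [hP_zero]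
  have heven : CountIsDet (· / 2) (2 * k) k ((-1) ^ k.choose 2) (fun i => P (2 * i))
      (k - 1 / 2) := by
    induction k with
    | zero => simpa using CountIsDet.zero (s := (· / 2)) rfl _ (0 - 1 / 2)
    | succ k ih =>
      have h := (hodd k ih).succ_of_lt (f := fun i => P (2 * i)) rfl hs (by lia)
        hP.zero_eq_one fun i => hP.succ_sub (2 * i + 1)
      rwa [← neg_one_pow_choose_succ_two,
        show (k : ℚ) + 1 / 2 = (k + 1 : ℕ) - 1 / 2 by push_cast; ring] at h
  interval_cases e
  · simpa [sub_eq_add_neg, neg_div] using heven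
  · simpa using hodd k heven

/-! ### Points symmetric about the origin -/

section Symmetry

variable {R : Type*} [CommRing R]

/-- The splitting of `Fin (2 * m)` into even and odd numbers. -/
noncomputable def evenOddEquiv (m : ℕ) : Fin m ⊕ Fin m ≃ Fin (2 * m) :=
  .ofBijective (Sum.elim (fun i => ⟨2 * i, by lia⟩) fun i => ⟨2 * i + 1, by lia⟩) <|
    (Fintype.bijective_iff_injective_and_card _).mpr ⟨.sumElim
      (fun i j h => by simpa [Fin.ext_iff] using h) (fun i j h => by simpa [Fin.ext_iff] using h)
      fun i j h => by have := Fin.mk.inj h; lia, by simp [two_mul]⟩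

/-- The splitting of `Fin (2 * m)` into its left half and its right half, the latter reversed. -/
noncomputable def leftRightEquiv (m : ℕ) : Fin m ⊕ Fin m ≃ Fin (2 * m) :=
  .ofBijective (Sum.elim (fun p => ⟨p, by lia⟩) fun p => Fin.rev ⟨p, by lia⟩) <|
    (Fintype.bijective_iff_injective_and_card _).mpr ⟨.sumElim
      (fun p q h => by simpa [Fin.ext_iff] using h)
      (fun p q h => by simpa [Fin.ext_iff] using Fin.rev_injective h)
      fun p q h => by have := Fin.mk.inj h; lia, by simp [two_mul]⟩

theorem det_fromBlocks_smul_smul {m : ℕ} (A B : Matrix (Fin m) (Fin m) R) (u : R) :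
    (fromBlocks A (u • A) B (-u • B)).det = (-u) ^ m * 2 ^ m * (A.det * B.det) := by
  have hfactor : fromBlocks A (u • A) B (-u • B) =
      fromBlocks A 0 0 B * fromBlocks 1 (u • 1) 1 (-u • 1) := by
    simp [fromBlocks_multiply]
  have hdiag : -u • (1 : Matrix (Fin m) (Fin m) R) - 1 * u • 1 = (-u * 2) • 1 := by
    rw [one_mul, ← sub_smul]
    ring_nf
  rw [hfactor, det_mul, det_fromBlocks_zero₁₂, det_fromBlocks_one₁₁, hdiag, det_smul, det_one,
    Fintype.card_fin, mul_one, mul_pow, mul_comm]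

theorem exists_det_eq_of_rev (m e : ℕ) :
    ∃ ε : ℤˣ, ∀ M : Matrix (Fin (2 * m)) (Fin (2 * m)) R,
      (∀ i p, M i p.rev = (-1) ^ (i + e : ℕ) * M i p) →
      M.det = ε * 2 ^ m *
        ((of fun i p : Fin m => M ⟨2 * i, by lia⟩ ⟨p, by lia⟩).det *
          (of fun i p : Fin m => M ⟨2 * i + 1, by lia⟩ ⟨p, by lia⟩).det) := by
  refine ⟨Equiv.Perm.sign ((leftRightEquiv m).trans (evenOddEquiv m).symm) * (-(-1) ^ e) ^ m,
    fun M hM => ?_⟩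
  set A := of fun i p : Fin m => M ⟨2 * i, by lia⟩ ⟨p, by lia⟩
  set B := of fun i p : Fin m => M ⟨2 * i + 1, by lia⟩ ⟨p, by lia⟩
  have hblocks : M.submatrix (evenOddEquiv m) (leftRightEquiv m) =
      fromBlocks A ((-1 : R) ^ e • A) B (-(-1 : R) ^ e • B) := by
    ext (i | i) (p | p) <;> simp [A, B, evenOddEquiv, leftRightEquiv, hM, pow_add]
  rw [(Equiv.symm_apply_eq (reindex (evenOddEquiv m) (leftRightEquiv m))).mp hblocks, det_reindex,
    det_fromBlocks_smul_smul]
  push_cast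
  ring

end Symmetry

theorem IsCentralAppell.exists_det_eq {P : ℕ → ℚ → ℚ} (hP : IsCentralAppell P) (m e : ℕ) :
    ∃ ε : ℤˣ, ∀ x : Fin (2 * m) → ℚ, (∀ p, x p.rev = -x p) →
      (of fun i p : Fin (2 * m) => P (i + e) (x p)).det = ε * 2 ^ m *
        ((of fun i p : Fin m => P (2 * i + e) (x ⟨p, by lia⟩)).det *
          (of fun i p : Fin m => P (2 * i + 1 + e) (x ⟨p, by lia⟩)).det) := by
  obtain ⟨ε, hε⟩ := exists_det_eq_of_rev (R := ℚ) m e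
  exact ⟨ε, fun x hx => hε _ fun i p => by rw [of_apply, of_apply, hx, hP.neg]⟩

theorem det_meanCentralChoose_succ {n : ℕ} (x : Fin (n + 1) → ℚ) {j : Fin (n + 1)} (hj : x j = 0) :
    (of fun i p : Fin (n + 1) => meanCentralChoose i (x p)).det = (-1) ^ (j : ℕ) *
      (of fun i p : Fin n => meanCentralChoose (i + 1) (x (j.succAbove p))).det := by
  have hminor : (of fun i p : Fin (n + 1) => meanCentralChoose i (x p)).submatrix
      (Fin.succAbove 0) j.succAbove =
        of fun i p : Fin n => meanCentralChoose (i + 1) (x (j.succAbove p)) := by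
    ext
    simp
  rw [det_succ_column _ j, Fin.sum_univ_succ, hminor]
  simp [hj, meanCentralChoose_succ_zero, isCentralAppell_meanCentralChoose.zero_eq_one]

theorem exists_det_meanCentralChoose_eq (m : ℕ) {e : ℕ} (he : e < 2) :
    ∃ ε : ℤˣ, ∀ x : Fin (2 * m + e) → ℚ, (∀ p, x p.rev = -x p) →
      (of fun i p : Fin (2 * m + e) => meanCentralChoose i (x p)).det = ε * 2 ^ m *
        ((of fun i p : Fin m => meanCentralChoose (2 * i + e) (x ⟨p, by lia⟩)).det *
          (of fun i p : Fin m => meanCentralChoose (2 * i + 1 + e) (x ⟨p, by lia⟩)).det) := by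
  obtain ⟨ε, hε⟩ := isCentralAppell_meanCentralChoose.exists_det_eq m e
  interval_cases e
  · exact ⟨ε, hε⟩
  let j : Fin (2 * m + 1) := ⟨m, by lia⟩
  have hj : j.rev = j := Fin.ext (by rw [Fin.val_rev]; dsimp only [j]; lia)
  refine ⟨(-1) ^ m * ε, fun x hx => ?_⟩
  have hxj : x j = 0 := by
    have h := hx j
    rw [hj] at h
    linarith
  have hx_succAbove (p : Fin (2 * m)) : x (j.succAbove p.rev) = -x (j.succAbove p) := by
    rw [Fin.succAbove_rev_right, hj, hx]
  have hleft (p : Fin m) : j.succAbove ⟨p, by lia⟩ = ⟨p, by lia⟩ :=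
    Fin.succAbove_of_castSucc_lt _ _ (Fin.mk_lt_mk.mpr p.2)
  rw [det_meanCentralChoose_succ x hxj, hε _ hx_succAbove]
  simp only [hleft]
  push_cast
  ring

/-! ### Top rows on a grid -/

/-- The values of `P j, P (2 + j), P (4 + j), …` at the points `N - 1 - z + c` for `z < N`. -/
def gridMatrix (P : ℕ → ℚ → ℚ) (j : ℕ) (c : ℚ) (m N : ℕ) : Matrix (Fin m) (Fin N) ℚ :=
  of fun i z => P (2 * i + j) (z.rev + c)

theorem sum_filter_lt_rev {M : Type*} [AddCommMonoid M] {N : ℕ} (z : Fin N) (g : ℕ → M) :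
    ∑ x with z < x, g x.rev = ∑ t ∈ range z.rev, g t := by
  refine sum_nbij (fun x => (x.rev : ℕ)) ?_ ?_ ?_ fun _ _ => rfl
  · intro x hx
    simpa [Fin.lt_def] using Fin.rev_lt_rev.mpr (mem_filter.mp hx).2
  · exact (Fin.val_injective.comp Fin.rev_injective).injOn
  · intro t ht
    have htz : t < z.rev := by simpa using ht
    refine ⟨Fin.rev ⟨t, htz.trans z.rev.2⟩, ?_, by simp⟩
    exact mem_coe.mpr (mem_filter.mpr ⟨mem_univ _, Fin.lt_rev_iff.mpr (Fin.mk_lt_mk.mpr htz)⟩)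

theorem IsCentralAppell.sum_range_eq_sub {P : ℕ → ℚ → ℚ} (hP : IsCentralAppell P) (n T : ℕ)
    (c : ℚ) : ∑ t ∈ range T, P n (t + (c + 1 / 2)) = P (n + 1) (T + c) - P (n + 1) c := by
  have hstep (t : ℕ) :
      P n (t + (c + 1 / 2)) = P (n + 1) ((t + 1 : ℕ) + c) - P (n + 1) (t + c) := by
    rw [← hP.succ_sub]
    push_cast
    congr 2 <;> ring
  simp only [hstep, sum_range_sub (fun t : ℕ => P (n + 1) (t + c)), Nat.cast_zero, zero_add]

theorem gridMatrix_mul_orderKernel (e m N : ℕ) :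
    gridMatrix centralChoose e ((1 + e) / 2) m N * orderKernel ℚ (Fin N) =
      (2 : ℚ) • gridMatrix meanCentralChoose (1 + e) ((1 + e) / 2) m N := by
  have hP := isCentralAppell_centralChoose
  ext i z
  have hsum : ∑ x : Fin N with z < x, centralChoose (2 * i + e) (x.rev + (1 + e) / 2) =
      centralChoose (2 * i + (1 + e)) (z.rev + e / 2) := by
    have h := hP.sum_range_eq_sub (2 * i + e) z.rev (e / 2)
    rw [show 2 * (i : ℕ) + e + 1 = 2 * i + 1 + e by ring, centralChoose_eq_zero, sub_zero,
      add_assoc] at h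
    rw [← h, ← sum_filter_lt_rev z fun t => centralChoose (2 * i + e) (t + (e / 2 + 1 / 2))]
    exact sum_congr rfl fun x _ => by congr 2; ring
  have hsucc := hP.succ_sub (2 * i + e) (z.rev + (1 + e) / 2)
  rw [show 2 * (i : ℕ) + e + 1 = 2 * i + (1 + e) by ring,
    show (z.rev : ℚ) + (1 + e) / 2 - 1 / 2 = z.rev + e / 2 by ring] at hsucc
  have hentry : (gridMatrix centralChoose e ((1 + e) / 2) m N * orderKernel ℚ (Fin N)) i z =
      2 * centralChoose (2 * i + (1 + e)) (z.rev + e / 2) +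
        centralChoose (2 * i + e) (z.rev + (1 + e) / 2) := by
    simp only [mul_apply, orderKernel, of_apply, mul_add, sum_add_distrib, mul_ite, mul_one,
      mul_zero, ← sum_filter, gridMatrix, ← sum_mul, hsum, filter_eq, mem_univ, if_true,
      sum_singleton]
    ring
  rw [hentry, Matrix.smul_apply, gridMatrix, of_apply, meanCentralChoose, smul_eq_mul,
    show (z.rev : ℚ) + (1 + e) / 2 - 1 / 2 = z.rev + e / 2 by ring]
  linear_combination -hsucc

theorem le_orderEmb_apply {m n : ℕ} (z : Fin m ↪o Fin n) (p : Fin m) : (p : ℕ) ≤ z p := by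
  have h := card_le_card_of_injOn z
    (fun q hq => mem_coe.mpr (mem_Iio.mpr (z.lt_iff_lt.mpr (mem_Iio.mp hq)))) z.injective.injOn
    (s := Iio p) (t := Iio (z p))
  rwa [Fin.card_Iio, Fin.card_Iio] at h

theorem orderEmb_apply_le {m b : ℕ} (z : Fin m ↪o Fin (b + m)) (p : Fin m) :
    (z p : ℕ) ≤ b + p := by
  have h := card_le_card_of_injOn z
    (fun q hq => mem_coe.mpr (mem_Ioi.mpr (z.lt_iff_lt.mpr (mem_Ioi.mp hq)))) z.injective.injOn
    (s := Ioi p) (t := Ioi (z p))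
  rw [Fin.card_Ioi, Fin.card_Ioi] at h
  lia

section Rows

variable {m b e : ℕ}

/-- The sequence with `m` entries `b ≥ μ 0 ≥ ⋯ ≥ μ (m - 1)` encoded by the set of the `b + p - μ p`
for `p < m`. -/
noncomputable def gridRow (b : ℕ) (z : Fin m ↪o Fin (b + m)) : ℕ → ℕ :=
  padZero fun p => b + p - z p

theorem gridRow_val_add (z : Fin m ↪o Fin (b + m)) (p : Fin m) : gridRow b z p + z p = b + p := by
  rw [gridRow, padZero_val, Nat.sub_add_cancel (orderEmb_apply_le z p)]

theorem gridRow_of_le (z : Fin m ↪o Fin (b + m)) {p : ℕ} (hp : m ≤ p) : gridRow b z p = 0 :=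
  padZero_of_le _ hp

theorem gridRow_injective : Function.Injective (gridRow (m := m) b) := by
  intro z w h
  ext p
  have hz := gridRow_val_add z p
  have hw := gridRow_val_add w p
  rw [h] at hz
  lia

theorem gridRow_le (z : Fin m ↪o Fin (b + m)) (p : ℕ) : gridRow b z p ≤ b := by
  rcases lt_or_ge p m with hp | hp
  · have h := gridRow_val_add z ⟨p, hp⟩
    have hle : p ≤ z ⟨p, hp⟩ := le_orderEmb_apply z ⟨p, hp⟩
    lia
  · rw [gridRow_of_le z hp]
    exact b.zero_le

theorem gridRow_antitone (z : Fin m ↪o Fin (b + m)) : Antitone (gridRow b z) := by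
  refine antitone_nat_of_succ_le fun p => ?_
  rcases lt_or_ge (p + 1) m with hp | hp
  · have hz : z ⟨p, by lia⟩ < z ⟨p + 1, hp⟩ := z.lt_iff_lt.mpr (Fin.mk_lt_mk.mpr p.lt_succ_self)
    have h₀ := gridRow_val_add z ⟨p, by lia⟩
    have h₁ := gridRow_val_add z ⟨p + 1, hp⟩
    rw [Fin.lt_def] at hz
    dsimp only at h₀ h₁
    lia
  · rw [gridRow_of_le z hp]
    exact Nat.zero_le _

theorem exists_eq_gridRow {μ : ℕ → ℕ} (hμ : Antitone μ) (hμ₀ : ∀ p, m ≤ p → μ p = 0)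
    (hb : ∀ p, μ p ≤ b) : ∃ z : Fin m ↪o Fin (b + m), μ = gridRow b z := by
  let z (p : Fin m) : Fin (b + m) := ⟨b + p - μ p, by lia⟩
  have hz : StrictMono z := fun p q hpq => by
    have hanti := hμ hpq.le
    have hq := hb q
    rw [Fin.lt_def] at hpq ⊢
    dsimp only [z]
    lia
  refine ⟨.ofStrictMono z hz, funext fun p => ?_⟩
  rcases lt_or_ge p m with hp | hp
  · have h := gridRow_val_add (.ofStrictMono z hz) ⟨p, hp⟩
    have hle := hb p
    simp only [OrderEmbedding.coe_ofStrictMono, z] at h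
    lia
  · rw [hμ₀ p hp, gridRow_of_le _ hp]

/-- The row `l` with `l p + l (a - 1 - p) = 2 * b` for `p < a` whose excess over `b` is `μ`. Here
`μ` is at most `b` and vanishes from `a / 2` on, so the subtraction is not truncated. -/
def symmRow (a b : ℕ) (μ : ℕ → ℕ) (p : ℕ) : ℕ :=
  if p < a then b + μ p - μ (a - 1 - p) else 0

theorem exists_eq_symmRow_gridRow_iff (he : e < 2) {l : ℕ → ℕ} (hl : Antitone l)
    (hl₀ : ∀ p, 2 * m + e ≤ p → l p = 0) :
    (∀ p < 2 * m + e, l p + l (2 * m + e - 1 - p) = 2 * b) ↔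
      ∃ z : Fin m ↪o Fin (b + m), l = symmRow (2 * m + e) b (gridRow b z) := by
  constructor
  · intro h
    have hhalf (p : ℕ) (hp : m ≤ p) : l p - b = 0 := by
      rcases lt_or_ge p (2 * m + e) with hpa | hpa
      · have hsum := h p hpa
        have hanti := hl (show 2 * m + e - 1 - p ≤ p by lia)
        lia
      · rw [hl₀ p hpa, Nat.zero_sub]
    have hle (p : ℕ) : l p - b ≤ b := by
      rcases lt_or_ge p (2 * m + e) with hpa | hpa
      · have hsum := h p hpa
        lia
      · simp [hl₀ p hpa]
    obtain ⟨z, hz⟩ := exists_eq_gridRow (fun p q hpq => Nat.sub_le_sub_right (hl hpq) b) hhalf hle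
    refine ⟨z, funext fun p => ?_⟩
    rw [← hz, symmRow]
    split_ifs with hp
    · have hsum := h p hp
      lia
    · exact hl₀ p (not_lt.mp hp)
  · rintro ⟨z, rfl⟩ p hp
    have hp' : 2 * m + e - 1 - p < 2 * m + e := by lia
    have h₁ := gridRow_le z p
    have h₂ := gridRow_le z (2 * m + e - 1 - p)
    rw [symmRow, symmRow, if_pos hp, if_pos hp', Nat.sub_sub_self (by lia)]
    lia

theorem symmRow_antitone {μ : ℕ → ℕ} (hμ : Antitone μ) (a b : ℕ) :
    Antitone (symmRow a b μ) := by
  refine antitone_nat_of_succ_le fun p => ?_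
  have h := hμ p.le_succ
  have hrev := hμ (show a - 1 - (p + 1) ≤ a - 1 - p by lia)
  simp only [symmRow]
  lia

theorem symmRow_of_le {a p : ℕ} (hp : a ≤ p) (b : ℕ) (μ : ℕ → ℕ) : symmRow a b μ p = 0 :=
  if_neg hp.not_gt

theorem symmRow_add_symmRow (z : Fin m ↪o Fin (b + m)) {p : ℕ} (hp : p < 2 * m + e) (he : e < 2) :
    symmRow (2 * m + e) b (gridRow b z) p +
      symmRow (2 * m + e) b (gridRow b z) (2 * m + e - 1 - p) = 2 * b :=
  (exists_eq_symmRow_gridRow_iff he (symmRow_antitone (gridRow_antitone z) _ _)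
    fun _ hp => symmRow_of_le hp _ _).mpr ⟨z, rfl⟩ p hp

theorem symmRow_gridRow_val (z : Fin m ↪o Fin (b + m)) (p : Fin m) :
    symmRow (2 * m + e) b (gridRow b z) p = b + gridRow b z p := by
  rw [symmRow, if_pos (by lia), gridRow_of_le z (p := 2 * m + e - 1 - p) (by lia), Nat.sub_zero]

theorem symmRow_gridRow_injective :
    Function.Injective fun z : Fin m ↪o Fin (b + m) => symmRow (2 * m + e) b (gridRow b z) := by
  intro z w h
  refine gridRow_injective (funext fun p => ?_)
  rcases lt_or_ge p m with hp | hp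
  · have h := congrFun h p
    simpa only [symmRow_gridRow_val _ ⟨p, hp⟩, add_right_inj] using h
  · rw [gridRow_of_le z hp, gridRow_of_le w hp]

theorem gridRow_point (z : Fin m ↪o Fin (b + m)) (p : Fin m) :
    (gridRow b z p : ℚ) - (p : ℕ) + (m + (e - 1) / 2) = (z p).rev + (1 + e) / 2 := by
  have h := gridRow_val_add z p
  have hrev : (z p).rev + (z p + 1 : ℕ) = b + m := by
    rw [Fin.val_rev, Nat.sub_add_cancel (z p).2]
  qify at h hrev
  linear_combination h - hrev

theorem patternCount_half_gridRow {P : ℕ → ℚ → ℚ} (hP : IsCentralAppell P) (he : e < 2)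
    (z : Fin m ↪o Fin (b + m)) :
    (patternCount (· / 2) (2 * m + e) (gridRow b z) : ℚ) = (-1) ^ m.choose 2 *
      ((gridMatrix P e ((1 + e) / 2) m (b + m)).submatrix id z).det := by
  rw [(countIsDet_half hP m he).2 _ (gridRow_antitone z) fun p hp => gridRow_of_le z hp]
  simp only [gridRow_point]
  rfl

theorem exists_patternCount_symmRow (m b : ℕ) (he : e < 2) :
    ∃ ε : ℤˣ, ∀ z : Fin m ↪o Fin (b + m),
      (patternCount id (2 * m + e) (symmRow (2 * m + e) b (gridRow b z)) : ℚ) = ε * 2 ^ m *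
        (((gridMatrix meanCentralChoose e ((1 + e) / 2) m (b + m)).submatrix id z).det *
          ((gridMatrix meanCentralChoose (1 + e) ((1 + e) / 2) m (b + m)).submatrix id z).det) := by
  obtain ⟨ε, hε⟩ := exists_det_meanCentralChoose_eq m he
  refine ⟨(-1) ^ (2 * m + e).choose 2 * ε, fun z => ?_⟩
  let x (p : ℕ) : ℚ := symmRow (2 * m + e) b (gridRow b z) p - p + ((2 * m + e - 1) / 2 - b)
  have hx_rev (p : Fin (2 * m + e)) : x p.rev = -x p := by
    have h := symmRow_add_symmRow z p.2 he
    have hrev : (p.rev : ℕ) + (p + 1 : ℕ) = 2 * m + e := by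
      rw [Fin.val_rev, Nat.sub_add_cancel p.2]
    rw [show 2 * m + e - 1 - (p : ℕ) = p.rev by rw [Fin.val_rev]; lia] at h
    have h : (_ : ℚ) = _ := congrArg Nat.cast h
    have hrev : (_ : ℚ) = _ := congrArg Nat.cast hrev
    push_cast at h hrev
    linear_combination h - hrev
  have hx_point (p : Fin m) : x p = (z p).rev + (1 + e) / 2 := by
    rw [← gridRow_point, ← sub_eq_zero]
    simp only [x, symmRow_gridRow_val]
    push_cast
    ring
  have hdet := hε (fun p => x p) hx_rev
  simp only [hx_point, add_assoc] at hdet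
  rw [(countIsDet_triangular isCentralAppell_meanCentralChoose _ _).2 _
    (symmRow_antitone (gridRow_antitone z) _ _) fun p hp => symmRow_of_le hp _ _]
  refine (congrArg _ hdet).trans ?_
  push_cast
  simp only [mul_assoc]
  rfl

end Rows

theorem card_isPattern_eq_sum {ι : Type*} [Fintype ι] {s : ℕ → ℕ} (h₀ : s 0 = 0)
    (hs : ∀ n, s (n + 1) ≤ s n + 1) (n : ℕ) {Q : (ℕ → ℕ) → Prop} {ρ : ι → ℕ → ℕ}
    (hρ : ρ.Injective) (hQ : ∀ q, IsPattern s n q → (Q (q 0) ↔ ∃ z, q 0 = ρ z)) :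
    Nat.card {q // IsPattern s n q ∧ Q (q 0)} = ∑ z, patternCount s n (ρ z) := by
  have := finite_pattern h₀ hs n
  rw [← Nat.card_congr (sigmaFiberEquiv hρ hQ), Nat.card_sigma]
  rfl

theorem card_triangular_symm_eq_sum (m b : ℕ) {e : ℕ} (he : e < 2) :
    Nat.card {q // IsPattern id (2 * m + e) q ∧
        ∀ p < 2 * m + e, q 0 p + q 0 (2 * m + e - 1 - p) = 2 * b} =
      ∑ z : Fin m ↪o Fin (b + m),
        patternCount id (2 * m + e) (symmRow (2 * m + e) b (gridRow b z)) :=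
  card_isPattern_eq_sum (Q := fun l => ∀ p < 2 * m + e, l p + l (2 * m + e - 1 - p) = 2 * b)
    (s := id) rfl (fun _ => le_rfl) _ symmRow_gridRow_injective fun _ hq =>
    exists_eq_symmRow_gridRow_iff he (hq.antitone 0) (hq.eq_zero 0)

theorem card_half_le_eq_sum (m b : ℕ) {e : ℕ} (he : e < 2) :
    Nat.card {q // IsPattern (· / 2) (2 * m + e) q ∧ ∀ p, q 0 p ≤ b} =
      ∑ z : Fin m ↪o Fin (b + m), patternCount (· / 2) (2 * m + e) (gridRow b z) :=
  card_isPattern_eq_sum (Q := fun l => ∀ p, l p ≤ b) rfl (by lia) _ gridRow_injective fun _ hq =>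
    ⟨exists_eq_gridRow (hq.antitone 0) fun p hp => hq.eq_zero 0 p (by lia), fun ⟨z, hz⟩ =>
      hz ▸ gridRow_le z⟩

theorem exists_patternCount_symmRow_eq_mul (m b : ℕ) {e : ℕ} (he : e < 2) :
    ∃ ε : ℤˣ, ∀ z : Fin m ↪o Fin (b + m),
      (patternCount id (2 * m + e) (symmRow (2 * m + e) b (gridRow b z)) : ℚ) =
        ε * (((gridMatrix centralChoose e ((1 + e) / 2) m (b + m)).submatrix id z).det *
          ((gridMatrix centralChoose e ((1 + e) / 2) m (b + m) *
            orderKernel ℚ (Fin (b + m))).submatrix id z).det) := by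
  obtain ⟨ε, hε⟩ := exists_patternCount_symmRow m b he
  refine ⟨ε, fun z => ?_⟩
  have hunit : (-1 : ℚ) ^ m.choose 2 ≠ 0 := by simp
  have hmean := mul_left_cancel₀ hunit <|
    (patternCount_half_gridRow isCentralAppell_meanCentralChoose he z).symm.trans
      (patternCount_half_gridRow isCentralAppell_centralChoose he z)
  rw [hε, hmean, gridMatrix_mul_orderKernel, submatrix_smul, Pi.smul_apply, Pi.smul_apply, det_smul,
    Fintype.card_fin]
  ring

theorem card_triangular_symm_eq_card_half_le_sq (a b : ℕ) :
    Nat.card {q // IsPattern id a q ∧ ∀ p < a, q 0 p + q 0 (a - 1 - p) = 2 * b} =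
      Nat.card {q // IsPattern (· / 2) a q ∧ ∀ p, q 0 p ≤ b} ^ 2 := by
  obtain ⟨m, e, he, rfl⟩ : ∃ m e, e < 2 ∧ a = 2 * m + e := ⟨a / 2, a % 2, by lia, by lia⟩
  obtain ⟨ε, hε⟩ := exists_patternCount_symmRow_eq_mul m b he
  rw [card_triangular_symm_eq_sum m b he, card_half_le_eq_sum m b he]
  have hsq : ((∑ z : Fin m ↪o Fin (b + m),
        patternCount id (2 * m + e) (symmRow (2 * m + e) b (gridRow b z)) : ℕ) : ℚ) =
      ε * ((∑ z : Fin m ↪o Fin (b + m),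
        patternCount (· / 2) (2 * m + e) (gridRow b z) : ℕ) : ℚ) ^ 2 := by
    push_cast
    simp only [hε, patternCount_half_gridRow isCentralAppell_centralChoose he, ← mul_sum, mul_pow,
      sum_det_mul_det_mul_orderKernel, pow_right_comm _ _ 2, neg_one_sq, one_pow, one_mul]
  have hε_abs : |((ε : ℤ) : ℚ)| = 1 := by
    rcases Int.units_eq_one_or ε with rfl | rfl <;> simp
  have habs := congrArg abs hsq
  rw [abs_mul, hε_abs, one_mul, abs_pow, Nat.abs_cast, Nat.abs_cast] at habs
  exact_mod_cast habs

/-! ### Diagrams and height functions -/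

/-- The height functions of plane partitions in an `a × b × c` box, extended by zero. -/
structure IsHeight (a b c : ℕ) (h : ℕ → ℕ → ℕ) : Prop where
  succ_left_le : ∀ i j, h (i + 1) j ≤ h i j
  succ_right_le : ∀ i j, h i (j + 1) ≤ h i j
  le : ∀ i j, h i j ≤ c
  eq_zero : ∀ i j, a ≤ i ∨ b ≤ j → h i j = 0

/-- The diagram of the plane partition with height function `h`. -/
def diagram (a b c : ℕ) (h : ℕ → ℕ → ℕ) : Set (Fin a × Fin b × Fin c) :=
  {x | x.2.2 < h x.1 x.2.1}

section Diagram

variable {a b c : ℕ} {h : ℕ → ℕ → ℕ}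

theorem IsHeight.anti (hh : IsHeight a b c h) {i i' j j' : ℕ} (hi : i ≤ i') (hj : j ≤ j') :
    h i' j' ≤ h i j :=
  (antitone_nat_of_succ_le (f := fun i => h i j') (fun n => hh.succ_left_le n j') hi).trans
    (antitone_nat_of_succ_le (f := h i) (hh.succ_right_le i) hj)

theorem IsHeight.isLowerSet_diagram (hh : IsHeight a b c h) : IsLowerSet (diagram a b c h) :=
  fun _ _ hxy hx => (Fin.le_def.mp hxy.2.2).trans_lt <| lt_of_lt_of_le hx <|
    hh.anti (Fin.le_def.mp hxy.1) (Fin.le_def.mp hxy.2.1)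

theorem eq_of_le_of_forall_lt_iff {x y c : ℕ} (hx : x ≤ c) (hy : y ≤ c)
    (h : ∀ k < c, k < x ↔ k < y) : x = y := by
  rcases lt_trichotomy x y with hxy | hxy | hxy
  · exact absurd ((h x (hxy.trans_le hy)).mpr hxy) (lt_irrefl x)
  · exact hxy
  · exact absurd ((h y (hxy.trans_le hx)).mp hxy) (lt_irrefl y)

theorem diagram_injOn : Set.InjOn (diagram a b c) {h | IsHeight a b c h} := by
  intro h hh h' hh' heq
  ext i j
  by_cases hij : i < a ∧ j < b
  · exact eq_of_le_of_forall_lt_iff (hh.le i j) (hh'.le i j) fun k hk =>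
      Set.ext_iff.mp heq (⟨i, hij.1⟩, ⟨j, hij.2⟩, ⟨k, hk⟩)
  · rw [hh.eq_zero i j (by lia), hh'.eq_zero i j (by lia)]

theorem mem_iff_lt_card_of_isLowerSet {S : Finset (Fin c)} (hS : IsLowerSet (S : Set (Fin c)))
    (k : Fin c) : k ∈ S ↔ k < #S := by
  constructor
  · intro hk
    have hle : #(Iic k) ≤ #S := card_le_card fun l hl => hS (mem_Iic.mp hl) hk
    rwa [Fin.card_Iic] at hle
  · contrapose!
    intro hk
    have hle : #S ≤ #(Iio k) := card_le_card fun l hl =>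
      mem_Iio.mpr (lt_of_not_ge fun hkl => hk (hS hkl hl))
    rwa [Fin.card_Iio] at hle

open Classical in
theorem exists_diagram_eq {T : Set (Fin a × Fin b × Fin c)} (hT : IsLowerSet T) :
    ∃ h, IsHeight a b c h ∧ diagram a b c h = T := by
  let S (i j : ℕ) : Finset (Fin c) :=
    {k | ∃ (hi : i < a) (hj : j < b), ((⟨i, hi⟩, ⟨j, hj⟩, k) : Fin a × Fin b × Fin c) ∈ T}
  have hS_anti {i i' j j' : ℕ} (hi : i ≤ i') (hj : j ≤ j') : S i' j' ⊆ S i j := by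
    intro k hk
    obtain ⟨hi', hj', hmem⟩ := (mem_filter_univ k).mp hk
    refine (mem_filter_univ k).mpr ⟨hi.trans_lt hi', hj.trans_lt hj', hT ?_ hmem⟩
    exact ⟨hi, hj, le_rfl⟩
  have hS_lower (i j : ℕ) : IsLowerSet (S i j : Set (Fin c)) := by
    intro k l hlk hk
    obtain ⟨hi, hj, hmem⟩ := (mem_filter_univ k).mp hk
    refine mem_coe.mpr ((mem_filter_univ l).mpr ⟨hi, hj, hT ?_ hmem⟩)
    exact ⟨le_rfl, le_rfl, hlk⟩
  refine ⟨fun i j => #(S i j), ⟨fun i j => card_le_card (hS_anti i.le_succ le_rfl),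
    fun i j => card_le_card (hS_anti le_rfl j.le_succ), fun i j => card_finset_fin_le _, ?_⟩, ?_⟩
  · intro i j hij
    refine card_eq_zero.mpr (filter_eq_empty_iff.mpr ?_)
    rintro k - ⟨hi, hj, -⟩
    lia
  · ext ⟨i, j, k⟩
    exact (mem_iff_lt_card_of_isLowerSet (hS_lower i j) k).symm.trans <| (mem_filter_univ k).trans
      ⟨fun ⟨_, _, hmem⟩ => hmem, fun hmem => ⟨i.2, j.2, hmem⟩⟩

theorem card_isLowerSet_eq_card_isHeight {P : Set (Fin a × Fin b × Fin c) → Prop}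
    {Q : (ℕ → ℕ → ℕ) → Prop} (hPQ : ∀ h, IsHeight a b c h → (P (diagram a b c h) ↔ Q h)) :
    Nat.card {T : Set (Fin a × Fin b × Fin c) // IsLowerSet T ∧ P T} =
      Nat.card {h // IsHeight a b c h ∧ Q h} := by
  refine (Nat.card_congr (.ofBijective (fun h => ⟨diagram a b c h.1, h.2.1.isLowerSet_diagram,
    (hPQ _ h.2.1).mpr h.2.2⟩) ⟨fun h h' heq => ?_, ?_⟩)).symm
  · exact Subtype.ext (diagram_injOn h.2.1 h'.2.1 (congrArg Subtype.val heq))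
  · rintro ⟨T, hT, hP⟩
    obtain ⟨h, hh, rfl⟩ := exists_diagram_eq hT
    exact ⟨⟨h, hh, (hPQ h hh).mp hP⟩, rfl⟩

theorem IsHeight.ppComplement_diagram_eq_iff (hh : IsHeight a b c h) :
    ppComplement (diagram a b c h) = diagram a b c h ↔
      ∀ i < a, ∀ j < b, h i j + h (a - 1 - i) (b - 1 - j) = c := by
  have hmem (i : Fin a) (j : Fin b) (k : Fin c) :
      (i, j, k) ∈ ppComplement (diagram a b c h) ↔ k < c - h (a - 1 - i) (b - 1 - j) := by
    have hle := hh.le (a - 1 - i) (b - 1 - j)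
    simp only [ppComplement, diagram, Set.mem_ofPred_eq, Fin.val_rev, Nat.add_comm _ 1,
      ← Nat.sub_sub]
    lia
  constructor
  · intro heq i hi j hj
    have hle := hh.le (a - 1 - i) (b - 1 - j)
    have h := eq_of_le_of_forall_lt_iff (hh.le i j) (Nat.sub_le c _) fun k hk =>
      (Set.ext_iff.mp heq (⟨i, hi⟩, ⟨j, hj⟩, ⟨k, hk⟩)).symm.trans (hmem _ _ _)
    lia
  · intro hsum
    ext ⟨i, j, k⟩
    rw [hmem, ← Nat.eq_sub_of_add_eq (hsum i i.2 j j.2)]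
    rfl

theorem IsHeight.ppTranspose_diagram_eq_iff (hh : IsHeight a a c h) :
    ppTranspose (diagram a a c h) = diagram a a c h ↔ ∀ i j, h i j = h j i := by
  constructor
  · intro heq i j
    by_cases hij : i < a ∧ j < a
    · exact eq_of_le_of_forall_lt_iff (hh.le i j) (hh.le j i) fun k hk =>
        (Set.ext_iff.mp heq (⟨i, hij.1⟩, ⟨j, hij.2⟩, ⟨k, hk⟩)).symm
    · rw [hh.eq_zero i j (by lia), hh.eq_zero j i (by lia)]
  · intro hsymm
    ext ⟨i, j, k⟩
    simp only [ppTranspose, diagram, Set.mem_ofPred_eq, hsymm i j]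

end Diagram

/-! ### Heights and patterns -/

/-- The diagonals of a height function below and on the main diagonal. -/
def diagonals (h : ℕ → ℕ → ℕ) (d p : ℕ) : ℕ :=
  h (p + d) p

/-- The height function with lower diagonals `q` and opposite entries adding up to `2 * b`. -/
def triangularHeight (a b : ℕ) (q : ℕ → ℕ → ℕ) (i j : ℕ) : ℕ :=
  if i < a ∧ j < a then if j ≤ i then q (i - j) j else 2 * b - q (j - i) (a - 1 - j) else 0

section SelfComplementary

variable {a b c : ℕ} {h q : ℕ → ℕ → ℕ}

theorem IsHeight.isPattern_diagonals (hh : IsHeight a a c h) : IsPattern id a (diagonals h) where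
  interlaces d p := ⟨hh.anti (by lia) (by lia), hh.anti (by lia) (by lia)⟩
  eq_zero d p hp := hh.eq_zero _ _ (.inl (Nat.sub_le_iff_le_add.mp hp))

theorem triangularHeight_add (hq : IsPattern id a q)
    (hsum : ∀ p < a, q 0 p + q 0 (a - 1 - p) = 2 * b) {i j : ℕ} (hi : i < a) (hj : j < a) :
    triangularHeight a b q i j + triangularHeight a b q (a - 1 - i) (a - 1 - j) = 2 * b := by
  have hsum_i := hsum i hi
  have hsum_j := hsum j hj
  have hi' : a - 1 - (a - 1 - i) = i := by lia
  have hj' : a - 1 - (a - 1 - j) = j := by lia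
  have hle_i := hq.apply_le_apply_zero (j - i) (a - 1 - j)
  have hle_j := hq.apply_le_apply_zero (i - j) j
  simp only [triangularHeight, hj']
  rcases lt_trichotomy i j with hij | rfl | hij
  · rw [show a - 1 - i - (a - 1 - j) = j - i by lia]
    lia
  · rw [Nat.sub_self, Nat.sub_self]
    lia
  · rw [show a - 1 - j - (a - 1 - i) = i - j by lia]
    lia

theorem triangularHeight_succ_left_le (hq : IsPattern id a q)
    (hsum : ∀ p < a, q 0 p + q 0 (a - 1 - p) = 2 * b) (i j : ℕ) :
    triangularHeight a b q (i + 1) j ≤ triangularHeight a b q i j := by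
  simp only [triangularHeight]
  rcases lt_trichotomy (i + 1) j with hij | rfl | hij
  · have hinter := hq.interlaces (j - (i + 1)) (a - 1 - j)
    rw [show j - (i + 1) + 1 = j - i by lia] at hinter
    lia
  · have hinter := hq.interlaces 0 (a - 1 - (i + 1))
    have hsum_i := hsum (i + 1)
    rw [show i + 1 - i = 1 by lia, Nat.sub_self]
    lia
  · have hinter := hq.interlaces (i - j) j
    rw [show i - j + 1 = i + 1 - j by lia] at hinter
    lia

theorem triangularHeight_succ_right_le (hq : IsPattern id a q)
    (hsum : ∀ p < a, q 0 p + q 0 (a - 1 - p) = 2 * b) (i j : ℕ) :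
    triangularHeight a b q i (j + 1) ≤ triangularHeight a b q i j := by
  by_cases hlt : i < a ∧ j + 1 < a
  · simp only [triangularHeight]
    rcases lt_trichotomy i j with hij | rfl | hij
    · have hinter := hq.interlaces (j - i) (a - 1 - (j + 1))
      rw [show j - i + 1 = j + 1 - i by lia,
        show a - 1 - (j + 1) + 1 = a - 1 - j by lia] at hinter
      lia
    · have hinter := hq.interlaces 0 (a - 1 - (i + 1))
      have hsum_i := hsum i hlt.1
      rw [show a - 1 - (i + 1) + 1 = a - 1 - i by lia] at hinter
      rw [show i + 1 - i = 1 by lia, Nat.sub_self]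
      lia
    · have hinter := hq.interlaces (i - (j + 1)) j
      rw [show i - (j + 1) + 1 = i - j by lia] at hinter
      lia
  · exact (if_neg hlt).trans_le (Nat.zero_le _)

theorem isHeight_triangularHeight (hq : IsPattern id a q)
    (hsum : ∀ p < a, q 0 p + q 0 (a - 1 - p) = 2 * b) :
    IsHeight a a (2 * b) (triangularHeight a b q) where
  succ_left_le := triangularHeight_succ_left_le hq hsum
  succ_right_le := triangularHeight_succ_right_le hq hsum
  le i j := by
    have hle := hq.apply_le_apply_zero (i - j) j
    have hsum_j := hsum j
    simp only [triangularHeight]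
    lia
  eq_zero i j hij := if_neg (by lia)

theorem diagonals_triangularHeight (hq : IsPattern id a q) :
    diagonals (triangularHeight a b q) = q := by
  ext d p
  have hzero := hq.eq_zero d p
  simp only [id_eq] at hzero
  simp only [diagonals, triangularHeight, Nat.add_sub_cancel_left]
  lia

theorem triangularHeight_diagonals (hh : IsHeight a a (2 * b) h)
    (hsum : ∀ i < a, ∀ j < a, h i j + h (a - 1 - i) (a - 1 - j) = 2 * b) :
    triangularHeight a b (diagonals h) = h := by
  ext i j
  simp only [triangularHeight, diagonals]
  split_ifs with hij hle
  · rw [Nat.add_sub_cancel' hle]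
  · have h := hsum i hij.1 j hij.2
    rw [show a - 1 - j + (j - i) = a - 1 - i by lia]
    lia
  · exact (hh.eq_zero i j (by lia)).symm

/-- Self-complementary height functions are determined by their diagonals. -/
def selfComplementaryEquiv (a b : ℕ) :
    {h // IsHeight a a (2 * b) h ∧
      ∀ i < a, ∀ j < a, h i j + h (a - 1 - i) (a - 1 - j) = 2 * b} ≃
    {q // IsPattern id a q ∧ ∀ p < a, q 0 p + q 0 (a - 1 - p) = 2 * b} where
  toFun h := ⟨diagonals h, h.2.1.isPattern_diagonals, fun p hp => h.2.2 p hp p hp⟩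
  invFun q := ⟨triangularHeight a b q, isHeight_triangularHeight q.2.1 q.2.2,
    fun _ hi _ hj => triangularHeight_add q.2.1 q.2.2 hi hj⟩
  left_inv h := Subtype.ext (triangularHeight_diagonals h.2.1 h.2.2)
  right_inv q := Subtype.ext (diagonals_triangularHeight q.2.1)

end SelfComplementary

/-- The symmetric array with lower diagonals `q`. -/
def symmArray (q : ℕ → ℕ → ℕ) (i j : ℕ) : ℕ :=
  q (max i j - min i j) (min i j)

/-- The self-complementary height function in the `a × a × 2b` box whose positive excess over `b` is
`symmArray q`. Here `q` is at most `b`, so the subtraction is not truncated. -/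
def symmHeight (a b : ℕ) (q : ℕ → ℕ → ℕ) (i j : ℕ) : ℕ :=
  if i < a ∧ j < a then b + symmArray q i j - symmArray q (a - 1 - i) (a - 1 - j) else 0

section SymmetricSelfComplementary

variable {a b : ℕ} {h q : ℕ → ℕ → ℕ}

theorem symmArray_comm (q : ℕ → ℕ → ℕ) (i j : ℕ) : symmArray q i j = symmArray q j i := by
  rw [symmArray, symmArray, max_comm, min_comm]

theorem IsPattern.symmArray_succ_left_le {s : ℕ → ℕ} {n : ℕ} (hq : IsPattern s n q) (i j : ℕ) :
    symmArray q (i + 1) j ≤ symmArray q i j := by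
  rcases lt_or_ge i j with hij | hij
  · have hinter := hq.interlaces (j - (i + 1)) i
    rw [show j - (i + 1) + 1 = j - i by lia] at hinter
    simpa only [symmArray, max_eq_right hij.le, min_eq_left hij.le, max_eq_right hij.nat_succ_le,
      min_eq_left hij.nat_succ_le] using hinter.1
  · have hinter := hq.interlaces (i - j) j
    rw [show i - j + 1 = i + 1 - j by lia] at hinter
    simpa only [symmArray, max_eq_left hij, min_eq_right hij, max_eq_left (Nat.le_succ_of_le hij),
      min_eq_right (Nat.le_succ_of_le hij)] using hinter.2

theorem IsPattern.symmArray_anti {s : ℕ → ℕ} {n : ℕ} (hq : IsPattern s n q)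
    {i i' j j' : ℕ} (hi : i ≤ i') (hj : j ≤ j') : symmArray q i' j' ≤ symmArray q i j := by
  have hanti (j : ℕ) : Antitone fun i => symmArray q i j :=
    antitone_nat_of_succ_le fun i => hq.symmArray_succ_left_le i j
  calc symmArray q i' j' ≤ symmArray q i j' := hanti j' hi
    _ = symmArray q j' i := symmArray_comm q i j'
    _ ≤ symmArray q j i := hanti i hj
    _ = symmArray q i j := symmArray_comm q j i

theorem IsPattern.symmArray_eq_zero_or (hq : IsPattern (· / 2) a q) {i j : ℕ} (hi : i < a)
    (hj : j < a) : symmArray q i j = 0 ∨ symmArray q (a - 1 - i) (a - 1 - j) = 0 := by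
  by_cases hle : (a - (max i j - min i j)) / 2 ≤ min i j
  · exact .inl (hq.eq_zero _ _ hle)
  · exact .inr (hq.eq_zero _ _ (by lia))

theorem IsPattern.symmArray_le (hq : IsPattern (· / 2) a q) (hb : ∀ p, q 0 p ≤ b) (i j : ℕ) :
    symmArray q i j ≤ b :=
  (hq.apply_le_apply_zero _ _).trans (hb _)

theorem symmHeight_add (hq : IsPattern (· / 2) a q) (hb : ∀ p, q 0 p ≤ b) {i j : ℕ}
    (hi : i < a) (hj : j < a) :
    symmHeight a b q i j + symmHeight a b q (a - 1 - i) (a - 1 - j) = 2 * b := by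
  have hle := hq.symmArray_le hb i j
  have hle' := hq.symmArray_le hb (a - 1 - i) (a - 1 - j)
  simp only [symmHeight, show a - 1 - (a - 1 - i) = i by lia, show a - 1 - (a - 1 - j) = j by lia]
  lia

theorem symmHeight_comm (a b : ℕ) (q : ℕ → ℕ → ℕ) (i j : ℕ) :
    symmHeight a b q i j = symmHeight a b q j i := by
  simp only [symmHeight, and_comm, symmArray_comm q i, symmArray_comm q (a - 1 - i)]

theorem isHeight_symmHeight (hq : IsPattern (· / 2) a q) (hb : ∀ p, q 0 p ≤ b) :
    IsHeight a a (2 * b) (symmHeight a b q) := by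
  have succ_left_le (i j : ℕ) : symmHeight a b q (i + 1) j ≤ symmHeight a b q i j := by
    have hle := hq.symmArray_succ_left_le i j
    have hle' := hq.symmArray_anti (show a - 1 - (i + 1) ≤ a - 1 - i by lia) (le_refl (a - 1 - j))
    simp only [symmHeight]
    lia
  refine ⟨succ_left_le, fun i j => ?_, fun i j => ?_, fun i j hij => if_neg (by lia)⟩
  · rw [symmHeight_comm, symmHeight_comm a b q i]
    exact succ_left_le j i
  · have hle := hq.symmArray_le hb i j
    simp only [symmHeight]
    lia

theorem diagonals_symmHeight (hq : IsPattern (· / 2) a q) (d p : ℕ) :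
    diagonals (symmHeight a b q) d p - b = q d p := by
  have hsymm : symmArray q (p + d) p = q d p := by
    rw [symmArray, max_eq_left (by lia), min_eq_right (by lia), Nat.add_sub_cancel_left]
  rw [diagonals, symmHeight, hsymm]
  split_ifs with hp
  · have hzero := hq.symmArray_eq_zero_or hp.1 hp.2
    rw [hsymm] at hzero
    lia
  · rw [hq.eq_zero d p (by lia), Nat.zero_sub]

theorem IsHeight.isPattern_diagonals_sub (hh : IsHeight a a (2 * b) h)
    (hsymm : ∀ i j, h i j = h j i)
    (hsum : ∀ i < a, ∀ j < a, h i j + h (a - 1 - i) (a - 1 - j) = 2 * b) :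
    IsPattern (· / 2) a fun d p => diagonals h d p - b where
  interlaces d p := ⟨Nat.sub_le_sub_right (hh.anti (by lia) (by lia)) b,
    Nat.sub_le_sub_right (hh.anti (by lia) (by lia)) b⟩
  eq_zero d p hp := by
    refine Nat.sub_eq_zero_of_le ?_
    by_cases hpa : p + d < a
    · have hadd := hsum (p + d) hpa p (by lia)
      have hle : h (p + d) p ≤ h (a - 1 - p) (a - 1 - (p + d)) := hh.anti (by lia) (by lia)
      rw [hsymm (a - 1 - p)] at hle
      rw [diagonals]
      lia
    · exact (hh.eq_zero _ _ (.inl (not_lt.mp hpa))).trans_le b.zero_le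

theorem symmHeight_diagonals_sub (hh : IsHeight a a (2 * b) h) (hsymm : ∀ i j, h i j = h j i)
    (hsum : ∀ i < a, ∀ j < a, h i j + h (a - 1 - i) (a - 1 - j) = 2 * b) :
    symmHeight a b (fun d p => diagonals h d p - b) = h := by
  have hexcess (i j : ℕ) : symmArray (fun d p => diagonals h d p - b) i j = h i j - b := by
    rcases le_total i j with hij | hij
    · simp only [symmArray, diagonals, max_eq_right hij, min_eq_left hij, Nat.add_sub_cancel' hij,
        hsymm j i]
    · simp only [symmArray, diagonals, max_eq_left hij, min_eq_right hij, Nat.add_sub_cancel' hij]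
  ext i j
  rw [symmHeight, hexcess, hexcess]
  split_ifs with hij
  · have hadd := hsum i hij.1 j hij.2
    lia
  · exact (hh.eq_zero i j (by lia)).symm

theorem IsHeight.diagonals_sub_le (hh : IsHeight a a (2 * b) h) (d p : ℕ) :
    diagonals h d p - b ≤ b := by
  have hle := hh.le (p + d) p
  rw [diagonals]
  lia

/-- Symmetric self-complementary height functions are determined by the positive excess of their
diagonals over `b`. -/
def symmSelfComplementaryEquiv (a b : ℕ) :
    {h // IsHeight a a (2 * b) h ∧ (∀ i j, h i j = h j i) ∧
      ∀ i < a, ∀ j < a, h i j + h (a - 1 - i) (a - 1 - j) = 2 * b} ≃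
    {q // IsPattern (· / 2) a q ∧ ∀ p, q 0 p ≤ b} where
  toFun h := ⟨fun d p => diagonals h d p - b, h.2.1.isPattern_diagonals_sub h.2.2.1 h.2.2.2,
    h.2.1.diagonals_sub_le 0⟩
  invFun q := ⟨symmHeight a b q, isHeight_symmHeight q.2.1 q.2.2, symmHeight_comm a b q,
    fun _ hi _ hj => symmHeight_add q.2.1 q.2.2 hi hj⟩
  left_inv h := Subtype.ext (symmHeight_diagonals_sub h.2.1 h.2.2.1 h.2.2.2)
  right_inv q := Subtype.ext (funext₂ (diagonals_symmHeight q.2.1))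

end SymmetricSelfComplementary

end PlanePartition

/-- Equation (1.2): `SC(a,a,2b) = SSC(a,a,2b)²`.
Plane partitions in the box are identified with lower sets of
`{0,…,a−1} × {0,…,a−1} × {0,…,2b−1}` with the (componentwise) product order. -/
theorem self_complementary_eq_symmetric_self_complementary_sq (a b : ℕ) :
    Nat.card {T : Set (Fin a × Fin a × Fin (2 * b)) //
        IsLowerSet T ∧ ppComplement T = T}
      = Nat.card {T : Set (Fin a × Fin a × Fin (2 * b)) //
          IsLowerSet T ∧ ppTranspose T = T ∧ ppComplement T = T} ^ 2 := by
  rw [PlanePartition.card_isLowerSet_eq_card_isHeight fun h hh => hh.ppComplement_diagram_eq_iff,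
    PlanePartition.card_isLowerSet_eq_card_isHeight fun h hh =>
      and_congr hh.ppTranspose_diagram_eq_iff hh.ppComplement_diagram_eq_iff,
    Nat.card_congr (PlanePartition.selfComplementaryEquiv a b),
    Nat.card_congr (PlanePartition.symmSelfComplementaryEquiv a b)]
  exact PlanePartition.card_triangular_symm_eq_card_half_le_sq a b
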